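/- Let K be a field equipped with two commuting ring endomorphisms φ and σ such that the subfield K^φ = {a ∈ K | φ(a) = a} is algebraically closed and σ maps K^φ onto itself. Let A ∈ GL_n(K). Then there exists a σ-PV extension for φ(y) = A y: a commutative ring L with commuting ring endomorphisms Φ and Σ, an injective ring homomorphism ι : K → L with Φ ∘ ι = ι ∘ φ and Σ ∘ ι = ι ∘ σ, such that (L, Φ) is a φ-pseudo field, the Φ-constants of L are exactly ι(K^φ), and there is Y ∈ GL_n(L) with Φ applied entrywise to Y equal to (ι applied entrywise to A) · Y and L is σ-generated by Y over K: every element of L can be written as a · b^{-1} where a and b lie in the ι(K)-subalgebra of L generated by the entries of Σ^i(Y) for all i ≥ 0, and b is a unit in L. -/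

import Mathlib

/-- A `φ`-ring `R` is `φ`-simple if the zero ideal and the whole ring are its only
`φ`-ideals (ideals `I` with `φ(I) ⊆ I`). -/
def DiffSimple {R : Type*} [CommRing R] (φ : R →+* R) : Prop :=
  (⊥ : Ideal R) ≠ ⊤ ∧ ∀ I : Ideal R, (∀ x ∈ I, φ x ∈ I) → I = ⊥ ∨ I = ⊤

/-- A `φ`-pseudo field is a `φ`-simple Noetherian `φ`-ring in which every
non-zero-divisor is a unit. -/
def PseudoField (R : Type*) [CommRing R] (φ : R →+* R) : Prop :=
  DiffSimple φ ∧ IsNoetherianRing R ∧ ∀ x ∈ nonZeroDivisors R, IsUnit x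

/-!
Together with `(det Y)⁻¹`, the matrix `Y` solves a linear system `φ(x) = B x`, so a `σ`-PV ring is
a quotient of the polynomial ring over `K` in the `σ`-transforms of one indeterminate vector. It is
the union of stages, the `d`-th one involving the transforms up to order `d` and being a quotient by
a maximal `φ`-ideal. Over a `φ`-simple ring the ideals of minors are `φ`-ideals, hence trivial, so
stable submodules of finite free modules are direct summands. Therefore a proper stable ideal of
polynomials stays proper under every change of scalars, which is what makes the relations
transported by `σ` compatible with those already imposed. Every stage is of finite type over `K`,
and `K^φ` is algebraically closed, so no new constants appear.

A Noetherian `φ`-simple ring is a finite product of domains permuted cyclically by `φ`. The crucial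
point is that the number of factors stays bounded along the stages. In coordinates given by a
fundamental matrix, the relations of level `d` are spanned by polynomials with constant
coefficients. Since polynomial rings over the constants are Noetherian and `σ` is onto on constants,
these relations are `σ`-reflexive from some level `D` on. As `σ` maps each idempotent of a stage
into the same stage, for `d ≥ D` every idempotent of stage `d + 1` already lies in stage `d`.

The union is thus itself a finite product of domains permuted cyclically, and its total ring of
fractions is the pseudo field sought; a constant fraction lies in the ring itself because its
denominators form a `φ`-ideal.
-/

/-- `I` is a `φ`-ideal: an ideal with `φ(I) ⊆ I`. -/
def IsDiffIdeal {R : Type*} [CommRing R] (φ : R →+* R) (I : Ideal R) : Prop :=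
  ∀ x ∈ I, φ x ∈ I

theorem isDiffIdeal_span {R : Type*} [CommRing R] {φ : R →+* R} {s : Set R}
    (h : ∀ x ∈ s, φ x ∈ Ideal.span s) : IsDiffIdeal φ (Ideal.span s) :=
  show Ideal.span s ≤ (Ideal.span s).comap φ from Ideal.span_le.2 h

namespace DiffSimple

variable {R : Type*} [CommRing R] {φ : R →+* R} (h : DiffSimple φ)
include h

theorem nontrivial : Nontrivial R := by
  by_contra hn
  rw [not_nontrivial_iff_subsingleton] at hn
  exact h.1 (Subsingleton.elim _ _)

theorem injective_of_semiconj {B : Type*} [CommRing B] [Nontrivial B] {ψ : B →+* B}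
    (j : R →+* B) (hj : ∀ a, ψ (j a) = j (φ a)) : Function.Injective j := by
  rw [RingHom.injective_iff_ker_eq_bot]
  refine (h.2 (RingHom.ker j) fun x hx => ?_).resolve_right (RingHom.ker_ne_top j)
  rw [RingHom.mem_ker] at hx ⊢
  rw [← hj, hx, map_zero]

theorem isUnit_of_fixed {c : R} (hc : φ c = c) (h0 : c ≠ 0) : IsUnit c := by
  have hspan : IsDiffIdeal φ (Ideal.span {c}) :=
    isDiffIdeal_span fun x hx => by
      rw [Set.mem_singleton_iff.1 hx, hc]
      exact Ideal.mem_span_singleton_self c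
  rcases h.2 _ hspan with hb | ht
  · exact absurd (Ideal.span_singleton_eq_bot.1 hb) h0
  · exact Ideal.span_singleton_eq_top.1 ht

end DiffSimple

section Minors

open Module

variable {A W : Type*} [CommRing A] [AddCommGroup W] [Module A W]

/-- The ideal generated by the `k × k` minors of a submodule `N`: the determinants of the
matrices `(ℓ_b (v_a))` with `v_a ∈ N` and `ℓ_b` linear functionals on the ambient module. -/
def minorIdeal (N : Submodule A W) (k : ℕ) : Ideal A :=
  Ideal.span {d | ∃ (v : Fin k → W) (ℓ : Fin k → Dual A W), (∀ a, v a ∈ N) ∧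
    (Matrix.of fun a b => ℓ b (v a)).det = d}

theorem minorIdeal_zero (N : Submodule A W) : minorIdeal N 0 = ⊤ :=
  (Ideal.eq_top_iff_one _).2 <|
    Ideal.subset_span ⟨Fin.elim0, Fin.elim0, fun a => a.elim0, Matrix.det_isEmpty⟩

theorem minorIdeal_eq_bot_of_card_lt {Γ : Type*} [Fintype Γ] {N W' : Submodule A W}
    (b : Basis Γ A W') (hN : N ≤ W') {k : ℕ} (hk : Fintype.card Γ < k) : minorIdeal N k = ⊥ := by
  rw [minorIdeal, eq_bot_iff, Ideal.span_le]
  rintro _ ⟨v, ℓ, hv, rfl⟩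
  have hzero : (Matrix.detRowAlternating (n := Fin k) (R := A)).compLinearMap
      (LinearMap.pi ℓ ∘ₗ W'.subtype) = 0 :=
    b.ext_alternating fun f hf =>
      absurd (Fintype.card_le_of_injective f hf) (by rw [Fintype.card_fin]; exact hk.not_ge)
  exact congrArg (· fun a => ⟨v a, hN (hv a)⟩) hzero

theorem isDiffIdeal_minorIdeal {φ : A →+* A} {F : W →ₛₗ[φ] W}
    (hF : ∀ ℓ : Dual A W, ∃ ℓ' : Dual A W, ∀ w, ℓ' (F w) = φ (ℓ w))
    {N : Submodule A W} (hN : ∀ w ∈ N, F w ∈ N) (k : ℕ) : IsDiffIdeal φ (minorIdeal N k) := by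
  refine isDiffIdeal_span ?_
  rintro _ ⟨v, ℓ, hv, rfl⟩
  choose ℓ' hℓ' using fun b => hF (ℓ b)
  refine Ideal.subset_span ⟨fun a => F (v a), ℓ', fun a => hN _ (hv a), ?_⟩
  rw [RingHom.map_det]
  congr 1
  ext a b
  exact hℓ' b (v a)

/-- The bordered determinant is `det S * d - w adj(S) u`; the factor `det S` on both sides lets
row operations replace the expansion along the border. -/
theorem det_mul_det_fromBlocks {n : Type*} [Fintype n] [DecidableEq n] (S : Matrix n n A)
    (u w : n → A) (d : A) :
    S.det * (Matrix.fromBlocks S (Matrix.replicateCol Unit u) (Matrix.replicateRow Unit w)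
      (Matrix.of fun _ _ => d)).det = S.det * (S.det * d - Matrix.vecMul w S.adjugate ⬝ᵥ u) := by
  have hmul : Matrix.fromBlocks 1 0 (-(Matrix.replicateRow Unit w * S.adjugate)) (S.det • 1) *
      Matrix.fromBlocks S (Matrix.replicateCol Unit u) (Matrix.replicateRow Unit w)
        (Matrix.of fun _ _ => d) =
      Matrix.fromBlocks S (Matrix.replicateCol Unit u) 0
        (Matrix.of fun _ _ => S.det * d - Matrix.vecMul w S.adjugate ⬝ᵥ u) := by
    rw [Matrix.fromBlocks_multiply]
    congr 1
    · simp
    · simp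
    · rw [Matrix.neg_mul, Matrix.mul_assoc, Matrix.adjugate_mul]
      simp
    · ext
      simp [Matrix.mul_apply, Matrix.vecMul, dotProduct, neg_add_eq_sub]
  have hdet := congrArg Matrix.det hmul
  rwa [Matrix.det_mul, Matrix.det_fromBlocks_zero₁₂, Matrix.det_fromBlocks_zero₂₁, Matrix.det_one,
    one_mul, Matrix.det_smul, Fintype.card_unit, pow_one, Matrix.det_one, mul_one,
    Matrix.det_unique (n := Unit), Matrix.of_apply] at hdet

theorem det_fromBlocks_eq_zero {N : Submodule A W} {k : ℕ} (hbot : minorIdeal N (k + 1) = ⊥)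
    {v : Fin k → W} (hv : ∀ a, v a ∈ N) (ℓ : Fin k → Dual A W) (ℓ₀ : Dual A W) {w : W}
    (hw : w ∈ N) :
    (Matrix.fromBlocks (Matrix.of fun a b => ℓ b (v a))
      (Matrix.replicateCol Unit fun a => ℓ₀ (v a)) (Matrix.replicateRow Unit fun b => ℓ b w)
      (Matrix.of fun _ _ => ℓ₀ w)).det = 0 := by
  let e : Fin (k + 1) ≃ Fin k ⊕ Unit :=
    finSumFinEquiv.symm.trans (Equiv.sumCongr (Equiv.refl _) finOneEquiv)
  rw [← Matrix.det_submatrix_equiv_self e, ← Ideal.mem_bot, ← hbot]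
  refine Ideal.subset_span ⟨fun a => Sum.elim v (fun _ => w) (e a),
    fun b => Sum.elim ℓ (fun _ => ℓ₀) (e b), fun a => ?_, ?_⟩
  · change Sum.elim v (fun _ => w) (e a) ∈ N
    rcases e a with a | _
    exacts [hv a, hw]
  · congr 1
    ext a b
    simp only [Matrix.of_apply, Matrix.submatrix_apply]
    rcases e a with a | _ <;> rcases e b with b | _ <;> rfl

/-- The scalars `δ` for which multiplication by `δ` on `N` extends to a linear map from the
ambient module to `N`; it is the unit ideal exactly when `N` is a direct summand. -/
def summandIdeal (N : Submodule A W) : Ideal A where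
  carrier := {δ | ∃ P : W →ₗ[A] W, (∀ w, P w ∈ N) ∧ ∀ w ∈ N, P w = δ • w}
  zero_mem' := ⟨0, fun _ => N.zero_mem, fun w _ => by rw [LinearMap.zero_apply, zero_smul]⟩
  add_mem' := fun ⟨P, hP, hP'⟩ ⟨Q, hQ, hQ'⟩ =>
    ⟨P + Q, fun w => N.add_mem (hP w) (hQ w), fun w hw => by
      rw [LinearMap.add_apply, hP' w hw, hQ' w hw, add_smul]⟩
  smul_mem' := fun r _ ⟨P, hP, hP'⟩ =>
    ⟨r • P, fun w => N.smul_mem r (hP w), fun w hw => by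
      rw [LinearMap.smul_apply, hP' w hw, smul_smul, smul_eq_mul]⟩

theorem sq_minor_mem_summandIdeal {Γ : Type*} (b : Basis Γ A W) {N : Submodule A W} {k : ℕ}
    (hbot : minorIdeal N (k + 1) = ⊥) {v : Fin k → W} (hv : ∀ a, v a ∈ N)
    (ℓ : Fin k → Dual A W) :
    (Matrix.of fun a b => ℓ b (v a)).det ^ 2 ∈ summandIdeal N := by
  set S : Matrix (Fin k) (Fin k) A := Matrix.of fun a b => ℓ b (v a) with hS
  -- Cramer's rule expresses `det S • w` in terms of the `v a`.
  let c : W →ₗ[A] (Fin k → A) := S.adjugate.vecMulLinear ∘ₗ LinearMap.pi ℓ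
  refine ⟨S.det • Fintype.linearCombination A v ∘ₗ c, fun w => ?_, fun w hw => ?_⟩
  · refine N.smul_mem _ ?_
    rw [LinearMap.comp_apply, Fintype.linearCombination_apply]
    exact sum_mem fun a _ => N.smul_mem _ (hv a)
  · refine b.ext_elem_iff.2 fun γ => ?_
    have hdet := det_mul_det_fromBlocks S (fun a => b.coord γ (v a)) (fun b => ℓ b w) (b.coord γ w)
    rw [hS, det_fromBlocks_eq_zero hbot hv ℓ (b.coord γ) hw, ← hS, mul_zero, mul_sub, eq_comm,
      sub_eq_zero, ← mul_assoc, ← sq] at hdet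
    rw [← b.coord_apply, ← b.coord_apply, map_smul (b.coord γ), smul_eq_mul, hdet]
    simp only [LinearMap.smul_apply, LinearMap.comp_apply, Fintype.linearCombination_apply,
      map_smul, map_sum, smul_eq_mul]
    rfl

theorem summandIdeal_eq_top {Γ : Type*} (b : Basis Γ A W) {N : Submodule A W} {k : ℕ}
    (htop : minorIdeal N k = ⊤) (hbot : minorIdeal N (k + 1) = ⊥) : summandIdeal N = ⊤ := by
  rw [← top_le_iff, ← Ideal.span_pow_eq_top _ htop 2, Ideal.span_le]
  rintro _ ⟨_, ⟨v, ℓ, hv, rfl⟩, rfl⟩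
  exact sq_minor_mem_summandIdeal b hbot hv ℓ

/-- Over a `φ`-simple ring every ideal of minors of a stable submodule is `0` or `1`, so that the
submodule has constant rank. -/
theorem DiffSimple.exists_projection {φ : A →+* A} (hφ : DiffSimple φ) {Γ : Type*}
    (b : Basis Γ A W) {F : W →ₛₗ[φ] W}
    (hF : ∀ ℓ : Dual A W, ∃ ℓ' : Dual A W, ∀ w, ℓ' (F w) = φ (ℓ w))
    {N W' : Submodule A W} [Module.Free A W'] [Module.Finite A W'] (hNW' : N ≤ W')
    (hN : ∀ w ∈ N, F w ∈ N) :
    ∃ P : W →ₗ[A] W, (∀ w, P w ∈ N) ∧ ∀ w ∈ N, P w = w := by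
  have hex : ∃ k, minorIdeal N k = ⊥ :=
    ⟨_, minorIdeal_eq_bot_of_card_lt (Free.chooseBasis A W') hNW' (Nat.lt_succ_self _)⟩
  obtain ⟨k, hk⟩ : ∃ k, Nat.find hex = k + 1 := Nat.exists_eq_succ_of_ne_zero fun h0 =>
    hφ.1 (((Nat.find_eq_zero hex).1 h0).symm.trans (minorIdeal_zero N))
  have htop : minorIdeal N k = ⊤ :=
    (hφ.2 _ (isDiffIdeal_minorIdeal hF hN k)).resolve_left (Nat.find_min hex (by omega))
  obtain ⟨P, hP, hP'⟩ : 1 ∈ summandIdeal N :=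
    summandIdeal_eq_top b htop (hk ▸ Nat.find_spec hex) ▸ Submodule.mem_top
  exact ⟨P, hP, fun w hw => (hP' w hw).trans (one_smul A w)⟩

theorem exists_dual_apply_eq {φ : A →+* A} {Γ : Type*} (b : Basis Γ A W) {F : W →ₛₗ[φ] W}
    {e : W →ₗ[A] W} (he : ∀ γ, e (F (b γ)) = b γ) (ℓ : Dual A W) :
    ∃ ℓ' : Dual A W, ∀ w, ℓ' (F w) = φ (ℓ w) := by
  have hext : (b.constr A (fun γ => φ (ℓ (b γ))) ∘ₗ e).comp F = φ.toSemilinearMap.comp ℓ :=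
    b.ext fun γ => by simp [he]
  exact ⟨b.constr A (fun γ => φ (ℓ (b γ))) ∘ₗ e, LinearMap.congr_fun hext⟩

theorem exists_dual_eq_of_projection {Q : Type*} [AddCommGroup Q] [Module A Q] {ρ : A →ₗ[A] Q}
    (hρ : Function.Injective ρ) {π : W →ₗ[A] Q} {N : Submodule A W}
    (hN : N ≤ (LinearMap.range ρ).comap π) {P : W →ₗ[A] W} (hPN : ∀ w, P w ∈ N)
    (hP : ∀ w ∈ N, P w = w) :
    ∃ G : Dual A W, ∀ w ∈ N, ∀ a, ρ a = π w → G w = a := by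
  refine ⟨(LinearEquiv.ofInjective ρ hρ).symm.toLinearMap ∘ₗ
    (π ∘ₗ P).codRestrict (LinearMap.range ρ) fun w => hN (hPN w), fun w hw a ha => ?_⟩
  rw [LinearMap.comp_apply, LinearEquiv.coe_coe, LinearEquiv.symm_apply_eq]
  exact Subtype.ext ((congrArg π (hP w hw)).trans ha.symm)

end Minors

section LinearTwist

open MvPolynomial

variable {V A B : Type*} [Fintype V] [CommRing A] [CommRing B]

/-- The homomorphism of polynomial rings extending `j` and sending the vector of variables `X` to
`M X`. For an endomorphism `j = φ` this is the action of the difference system `φ(y) = M y`. -/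
noncomputable def linearTwist (j : A →+* B) (M : Matrix V V B) :
    MvPolynomial V A →+* MvPolynomial V B :=
  (bind₁ M.toMvPolynomial : MvPolynomial V B →+* MvPolynomial V B).comp (map j)

theorem linearTwist_C (j : A →+* B) (M : Matrix V V B) (a : A) :
    linearTwist j M (C a) = C (j a) := by
  simp [linearTwist]

theorem linearTwist_X (j : A →+* B) (M : Matrix V V B) (v : V) :
    linearTwist j M (X v) = M.toMvPolynomial v := by
  simp [linearTwist]

variable {φ : A →+* A} {M : Matrix V V A}

theorem linearTwist_smul (a : A) (f : MvPolynomial V A) :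
    linearTwist φ M (a • f) = φ a • linearTwist φ M f := by
  rw [smul_eq_C_mul, map_mul, linearTwist_C, ← smul_eq_C_mul]

theorem totalDegree_linearTwist_le (f : MvPolynomial V A) :
    (linearTwist φ M f).totalDegree ≤ f.totalDegree := by
  have hmon : linearTwist φ M f =
      ∑ m ∈ f.support, C (φ (f.coeff m)) * ∏ v, M.toMvPolynomial v ^ m v := by
    conv_lhs => rw [f.as_sum]
    simp only [map_sum, monomial_eq, map_mul, linearTwist_C, Finsupp.prod_fintype, pow_zero,
      implies_true, map_prod, map_pow, linearTwist_X]
  rw [hmon]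
  refine totalDegree_finsetSum_le fun m hm => (totalDegree_mul _ _).trans ?_
  rw [totalDegree_C, zero_add]
  refine (totalDegree_finsetProd _ _).trans (le_trans (Finset.sum_le_sum fun v _ => ?_)
    ((Finsupp.sum_fintype m _ fun _ => rfl).symm.le.trans (le_totalDegree hm)))
  exact (totalDegree_pow _ _).trans
    ((Nat.mul_le_mul_left _ (M.toMvPolynomial_totalDegree_le v)).trans (mul_one _).le)

theorem DiffSimple.exists_projection_of_linearTwist_mem (hφ : DiffSimple φ) [DecidableEq V]
    (hM : IsUnit M.det) {n : ℕ} {N : Submodule A (MvPolynomial V A)}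
    (hn : N ≤ restrictTotalDegree V A n) (hN : ∀ f ∈ N, linearTwist φ M f ∈ N) :
    ∃ P : MvPolynomial V A →ₗ[A] MvPolynomial V A, (∀ f, P f ∈ N) ∧ ∀ f ∈ N, P f = f := by
  let F : MvPolynomial V A →ₛₗ[φ] MvPolynomial V A :=
    { linearTwist φ M with map_smul' := linearTwist_smul }
  have hinv : ∀ m : V →₀ ℕ, (bind₁ M⁻¹.toMvPolynomial).toLinearMap (F (basisMonomials V A m)) =
      basisMonomials V A m := fun m => by
    have hX : ∀ v, bind₁ M⁻¹.toMvPolynomial (M.toMvPolynomial v) = X v := fun v => by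
      rw [← Matrix.toMvPolynomial_mul, Matrix.mul_nonsing_inv M hM, Matrix.toMvPolynomial_one]
    change bind₁ M⁻¹.toMvPolynomial (linearTwist φ M (basisMonomials V A m)) = _
    simp only [coe_basisMonomials, monomial_eq, map_one, one_mul, Finsupp.prod_fintype, pow_zero,
      implies_true, map_prod, map_pow, linearTwist_X, hX]
  have : Module.Free A (restrictTotalDegree V A n) := .of_basis (basisRestrictSupport A _)
  exact hφ.exists_projection (basisMonomials V A) (F := F)
    (exists_dual_apply_eq (basisMonomials V A) hinv) hn hN

/-- The quotient by a proper stable ideal is pure over `A` in each degree. -/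
theorem DiffSimple.exists_dual_eq_zero_of_mem (hφ : DiffSimple φ) [DecidableEq V]
    (hM : IsUnit M.det) {𝔞 : Ideal (MvPolynomial V A)} (h𝔞 : IsDiffIdeal (linearTwist φ M) 𝔞)
    (h1 : 𝔞 ≠ ⊤) (n : ℕ) :
    ∃ G : Module.Dual A (MvPolynomial V A), G 1 = 1 ∧ ∀ f ∈ 𝔞, f.totalDegree ≤ n → G f = 0 := by
  have := Ideal.Quotient.nontrivial_iff.2 h1
  let ρ := Algebra.linearMap A (MvPolynomial V A ⧸ 𝔞)
  let π := (Ideal.Quotient.mkₐ A 𝔞).toLinearMap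
  have hρ : Function.Injective ρ := hφ.injective_of_semiconj
    (ψ := Ideal.quotientMap 𝔞 (linearTwist φ M) h𝔞) (algebraMap A _) fun a => by
      exact congrArg (Ideal.Quotient.mk 𝔞) (linearTwist_C φ M a)
  let N : Submodule A (MvPolynomial V A) := (LinearMap.range ρ).comap π ⊓ restrictTotalDegree V A n
  have hN : ∀ f ∈ N, linearTwist φ M f ∈ N := by
    rintro f ⟨⟨a, ha⟩, hf⟩
    refine ⟨⟨φ a, ?_⟩, ?_⟩
    · change Ideal.Quotient.mk 𝔞 (C a) = Ideal.Quotient.mk 𝔞 f at ha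
      change Ideal.Quotient.mk 𝔞 (C (φ a)) = Ideal.Quotient.mk 𝔞 (linearTwist φ M f)
      rw [Ideal.Quotient.eq] at ha ⊢
      rw [← linearTwist_C φ M, ← map_sub]
      exact h𝔞 _ ha
    · exact (mem_restrictTotalDegree ..).2
        ((totalDegree_linearTwist_le f).trans ((mem_restrictTotalDegree ..).1 hf))
  obtain ⟨P, hPN, hP⟩ := hφ.exists_projection_of_linearTwist_mem hM (N := N) inf_le_right hN
  obtain ⟨G, hG⟩ := exists_dual_eq_of_projection hρ inf_le_left hPN hP
  have h0 : ∀ f ∈ 𝔞, ρ 0 = π f := fun f hf =>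
    (map_zero ρ).trans (Ideal.Quotient.eq_zero_iff_mem.2 hf).symm
  refine ⟨G, hG 1 ⟨⟨1, rfl⟩, ?_⟩ 1 rfl, fun f hf hn =>
    hG f ⟨⟨0, h0 f hf⟩, (mem_restrictTotalDegree ..).2 hn⟩ 0 (h0 f hf)⟩
  exact (mem_restrictTotalDegree ..).2 (by rw [totalDegree_one]; exact n.zero_le)

end LinearTwist

section ScalarExtension

open MvPolynomial

variable {V A B : Type*} [CommRing A] [CommRing B] (s : A →+* B)

theorem exists_dual_map_eq (G : Module.Dual A (MvPolynomial V A)) :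
    ∃ G' : Module.Dual B (MvPolynomial V B), ∀ f, G' (map s f) = s (G f) := by
  refine ⟨(basisMonomials V B).constr B fun m => s (G (monomial m 1)), fun f => ?_⟩
  induction f using MvPolynomial.induction_on' with
  | monomial m a =>
    have hB : monomial m (s a) = s a • basisMonomials V B m := by
      rw [coe_basisMonomials, smul_monomial, smul_eq_mul, mul_one]
    have hA : monomial m a = a • (monomial m 1 : MvPolynomial V A) := by
      rw [smul_monomial, smul_eq_mul, mul_one]
    rw [map_monomial, hB, map_smul, Module.Basis.constr_basis, hA, map_smul, smul_eq_mul,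
      smul_eq_mul, map_mul]
  | add p q hp hq => simp only [map_add, hp, hq]

variable {s}

theorem mem_span_image_of_mem_map {𝔞 : Ideal (MvPolynomial V A)} {q : MvPolynomial V B}
    (hq : q ∈ 𝔞.map (map s)) : q ∈ Submodule.span B (map s '' (𝔞 : Set (MvPolynomial V A))) := by
  set N := Submodule.span B (map s '' (𝔞 : Set (MvPolynomial V A)))
  have hmon : ∀ (m : V →₀ ℕ) (f : MvPolynomial V B), f ∈ N → monomial m 1 * f ∈ N := by
    intro m f hf
    induction hf using Submodule.span_induction with
    | mem _ hf =>
      obtain ⟨f, hf, rfl⟩ := hf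
      refine Submodule.subset_span ⟨monomial m 1 * f, 𝔞.mul_mem_left _ hf, ?_⟩
      rw [map_mul, map_monomial, map_one]
    | zero => simp
    | add f g _ _ hf hg => rw [mul_add]; exact N.add_mem hf hg
    | smul c f _ hf => rw [mul_smul_comm]; exact N.smul_mem c hf
  refine Submodule.span_induction (fun x hx => Submodule.subset_span hx) N.zero_mem
    (fun _ _ _ _ => N.add_mem) (fun g f _ hf => ?_) hq
  have hsum : g • f = ∑ m ∈ g.support, g.coeff m • (monomial m 1 * f) := by
    simp_rw [← smul_mul_assoc, smul_monomial, smul_eq_mul, mul_one, ← Finset.sum_mul]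
    rw [← g.as_sum]
  rw [hsum]
  exact sum_mem fun m _ => N.smul_mem _ (hmon m f hf)

theorem exists_degree_bound_of_mem_map {𝔞 : Ideal (MvPolynomial V A)} {q : MvPolynomial V B}
    (hq : q ∈ 𝔞.map (map s)) : ∃ n : ℕ, ∀ (G : Module.Dual A (MvPolynomial V A))
      (G' : Module.Dual B (MvPolynomial V B)), (∀ f, G' (map s f) = s (G f)) →
      (∀ f ∈ 𝔞, f.totalDegree ≤ n → G f = 0) → G' q = 0 := by
  obtain ⟨T, hT, hqT⟩ := Submodule.mem_span_finite_of_mem_span (mem_span_image_of_mem_map hq)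
  choose! r hr hrf using fun f (hf : f ∈ T) => hT hf
  refine ⟨T.sup fun f => (r f).totalDegree, fun G G' hG' hG => ?_⟩
  have hle : Submodule.span B (T : Set (MvPolynomial V B)) ≤ LinearMap.ker G' := by
    refine Submodule.span_le.2 fun f hf => ?_
    rw [SetLike.mem_coe, LinearMap.mem_ker, ← hrf f hf, hG',
      hG _ (hr f hf) (Finset.le_sup (f := fun f => (r f).totalDegree) hf), map_zero]
  exact hle hqT

/-- Purity survives an arbitrary change of scalars. -/
theorem DiffSimple.exists_dual_eq_zero_of_mem_map {φ : A →+* A} (hφ : DiffSimple φ) [Fintype V]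
    [DecidableEq V] {M : Matrix V V A} (hM : IsUnit M.det) {𝔞 : Ideal (MvPolynomial V A)}
    (h𝔞 : IsDiffIdeal (linearTwist φ M) 𝔞) (h1 : 𝔞 ≠ ⊤) {q : MvPolynomial V B}
    (hq : q ∈ 𝔞.map (map s)) :
    ∃ (G : Module.Dual A (MvPolynomial V A)) (G' : Module.Dual B (MvPolynomial V B)),
      (∀ f, G' (map s f) = s (G f)) ∧ G 1 = 1 ∧ G' q = 0 := by
  obtain ⟨n, hn⟩ := exists_degree_bound_of_mem_map hq
  obtain ⟨G, hG1, hG⟩ := hφ.exists_dual_eq_zero_of_mem hM h𝔞 h1 n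
  obtain ⟨G', hG'⟩ := exists_dual_map_eq s G
  exact ⟨G, G', hG', hG1, hn G G' hG' hG⟩

theorem DiffSimple.map_ne_top [Nontrivial B] {φ : A →+* A} (hφ : DiffSimple φ) [Fintype V]
    [DecidableEq V] {M : Matrix V V A} (hM : IsUnit M.det) {𝔞 : Ideal (MvPolynomial V A)}
    (h𝔞 : IsDiffIdeal (linearTwist φ M) 𝔞) (h1 : 𝔞 ≠ ⊤) : 𝔞.map (map s) ≠ ⊤ := fun htop => by
  obtain ⟨G, G', hG', hG1, hG0⟩ :=
    hφ.exists_dual_eq_zero_of_mem_map hM h𝔞 h1 (htop ▸ Submodule.mem_top : 1 ∈ 𝔞.map (map s))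
  rw [← map_one (map s), hG', hG1, map_one] at hG0
  exact one_ne_zero hG0

end ScalarExtension

section LinearTwist

open MvPolynomial

variable {V A A' S S' : Type*} [CommRing A] [CommRing A'] [CommRing S] [CommRing S'] [Fintype V]

theorem linearTwist_one [DecidableEq V] (j : A →+* S) : linearTwist j (1 : Matrix V V S) = map j :=
  ringHom_ext (fun a => by simp [linearTwist_C]) fun v => by simp [linearTwist_X]

theorem linearTwist_comp (j : A →+* A') (M : Matrix V V A') (j' : A' →+* S) (M' : Matrix V V S) :
    (linearTwist j' M').comp (linearTwist j M) = linearTwist (j'.comp j) (M.map j' * M') := by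
  refine ringHom_ext (fun a => by simp [linearTwist_C]) fun v => ?_
  rw [RingHom.comp_apply, linearTwist_X, linearTwist_X, Matrix.toMvPolynomial_mul,
    Matrix.toMvPolynomial_map]
  rfl

theorem eval₂Hom_linearTwist {j : A →+* S} {j' : A' →+* S'} {ψ : S →+* S'} {α : A →+* A'}
    (hα : ∀ a, ψ (j a) = j' (α a)) {M : Matrix V V A'} {x : V → S} {x' : V → S'}
    (hx : ∀ v, ψ (x v) = ∑ w, j' (M v w) * x' w) (f : MvPolynomial V A) :
    eval₂Hom j' x' (linearTwist α M f) = ψ (eval₂Hom j x f) := by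
  suffices H : (eval₂Hom j' x').comp (linearTwist α M) = ψ.comp (eval₂Hom j x) from
    RingHom.congr_fun H f
  refine ringHom_ext (fun a => ?_) fun v => ?_
  · simp only [RingHom.comp_apply, linearTwist_C, coe_eval₂Hom, eval₂_C, hα]
  · simp only [RingHom.comp_apply, linearTwist_X, coe_eval₂Hom, eval₂_X, hx,
      Matrix.toMvPolynomial, eval₂_sum, eval₂_monomial, Finsupp.prod_single_index, pow_zero,
      pow_one]

theorem isDiffIdeal_ker_eval₂Hom {φ : A →+* A} {ψ : S →+* S} {j : A →+* S}
    (hj : ∀ a, ψ (j a) = j (φ a)) {M : Matrix V V A} {x : V → S}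
    (hx : ∀ v, ψ (x v) = ∑ w, j (M v w) * x w) :
    IsDiffIdeal (linearTwist φ M) (RingHom.ker (eval₂Hom j x)) := fun f hf => by
  rw [RingHom.mem_ker, eval₂Hom_linearTwist hj hx, RingHom.mem_ker.1 hf, map_zero]

end LinearTwist

section MaximalDiffIdeal

variable {R B : Type*} [CommRing R] [CommRing B] {φ : R →+* R} {ψ : B →+* B} {f : R →+* B}

theorem IsDiffIdeal.sup {I J : Ideal R} (hI : IsDiffIdeal φ I) (hJ : IsDiffIdeal φ J) :
    IsDiffIdeal φ (I ⊔ J) :=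
  show I ⊔ J ≤ (I ⊔ J).comap φ from sup_le
    (le_trans (show I ≤ I.comap φ from hI) (Ideal.comap_mono le_sup_left))
    (le_trans (show J ≤ J.comap φ from hJ) (Ideal.comap_mono le_sup_right))

theorem IsDiffIdeal.map {I : Ideal R} (hI : IsDiffIdeal φ I) (hf : ∀ x, ψ (f x) = f (φ x)) :
    IsDiffIdeal ψ (I.map f) :=
  isDiffIdeal_span <| by
    rintro _ ⟨x, hx, rfl⟩
    rw [hf]
    exact Ideal.mem_map_of_mem f (hI x hx)

/-- `m` is maximal among the proper `φ`-ideals. -/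
def IsMaximalDiffIdeal (φ : R →+* R) (m : Ideal R) : Prop :=
  Maximal (fun I => IsDiffIdeal φ I ∧ I ≠ ⊤) m

theorem IsDiffIdeal.exists_le_isMaximalDiffIdeal {I : Ideal R} (hI : IsDiffIdeal φ I)
    (h1 : I ≠ ⊤) : ∃ m, I ≤ m ∧ IsMaximalDiffIdeal φ m := by
  refine zorn_le_nonempty₀ {J : Ideal R | IsDiffIdeal φ J ∧ J ≠ ⊤} (fun c hc hchain J hJ => ?_)
    I ⟨hI, h1⟩
  have hmem : ∀ x, x ∈ sSup c ↔ ∃ J' ∈ c, x ∈ J' := fun _ =>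
    Submodule.mem_sSup_of_directed ⟨J, hJ⟩ hchain.directedOn
  refine ⟨sSup c, ⟨fun x hx => ?_, ?_⟩, fun _ => le_sSup⟩
  · obtain ⟨J', hJ', hx⟩ := (hmem x).1 hx
    exact (hmem _).2 ⟨J', hJ', (hc hJ').1 x hx⟩
  · rw [Ne, Ideal.eq_top_iff_one, hmem]
    rintro ⟨J', hJ', hx⟩
    exact (hc hJ').2 ((Ideal.eq_top_iff_one _).2 hx)

theorem IsMaximalDiffIdeal.diffSimple_of_surjective [Nontrivial B] {m : Ideal R}
    (hm : IsMaximalDiffIdeal φ m) (hf : Function.Surjective f) (hψ : ∀ x, ψ (f x) = f (φ x))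
    (hker : m ≤ RingHom.ker f) : DiffSimple ψ := by
  refine ⟨bot_ne_top, fun I hI => or_iff_not_imp_right.2 fun h1 => eq_bot_iff.2 fun y hy => ?_⟩
  have hIm : I.comap f ≤ m := by
    refine hm.2 ⟨fun x hx => ?_, mt Ideal.comap_eq_top_iff.1 h1⟩
      (hker.trans (Ideal.comap_mono bot_le))
    rw [Ideal.mem_comap, ← hψ]
    exact hI _ hx
  obtain ⟨x, rfl⟩ := hf y
  exact hker (hIm hy)

theorem IsMaximalDiffIdeal.diffSimple_quotient {m : Ideal R} (hm : IsMaximalDiffIdeal φ m) :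
    DiffSimple (Ideal.quotientMap m φ hm.1.1) :=
  have := Ideal.Quotient.nontrivial_iff.2 hm.1.2
  hm.diffSimple_of_surjective Ideal.Quotient.mk_surjective (fun _ => rfl) Ideal.mk_ker.ge

end MaximalDiffIdeal

section TowerRing

open MvPolynomial

/-- The universal ring for the `σ`-transforms of a linear difference system: the indeterminate
`X (i, v)` of level `i` stands for the `v`-th coordinate of `σⁱ` of a solution. -/
abbrev TowerRing (K V : Type*) [CommRing K] := MvPolynomial (ℕ × V) K

variable {K V : Type*} [CommRing K]

/-- The difference operator on the universal ring: the indeterminates of level `i` solve the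
system whose matrix is the `i`-th `σ`-transform of `B`. -/
noncomputable def towerPhi [Fintype V] (φ σ : K →+* K) (B : Matrix V V K) :
    TowerRing K V →+* TowerRing K V :=
  eval₂Hom (C.comp φ) fun p => ∑ w, C ((σ ^ p.1) (B p.2 w)) * X (p.1, w)

/-- The operator `X (i, v) ↦ X (i + 1, v)` acting by `σ` on coefficients. -/
noncomputable def towerSigma (V : Type*) (σ : K →+* K) : TowerRing K V →+* TowerRing K V :=
  eval₂Hom (C.comp σ) fun p => X (p.1 + 1, p.2)

/-- The truncation sending the indeterminates of level at least `d` to zero. It identifies the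
polynomial ring of the levels below `d` with a retract of the universal ring, so that all stages
of the construction can be ideals of one and the same ring. -/
noncomputable def towerTrunc (K V : Type*) [CommRing K] (d : ℕ) :
    TowerRing K V →ₐ[K] TowerRing K V :=
  aeval fun p => if p.1 < d then X p else 0

@[simp] theorem towerSigma_C (σ : K →+* K) (a : K) : towerSigma V σ (C a) = C (σ a) := by
  simp [towerSigma]

@[simp] theorem towerSigma_X (σ : K →+* K) (p : ℕ × V) :
    towerSigma V σ (X p) = X (p.1 + 1, p.2) := by
  simp [towerSigma]

@[simp] theorem towerTrunc_X (d : ℕ) (p : ℕ × V) :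
    towerTrunc K V d (X p) = if p.1 < d then X p else 0 := by
  simp [towerTrunc]

@[simp] theorem towerTrunc_C (d : ℕ) (a : K) : towerTrunc K V d (C a) = C a :=
  (towerTrunc K V d).commutes a

section Operators

variable [Fintype V] (φ σ : K →+* K) (B : Matrix V V K)

@[simp] theorem towerPhi_C (a : K) : towerPhi φ σ B (C a) = C (φ a) := by
  simp [towerPhi]

@[simp] theorem towerPhi_X (p : ℕ × V) :
    towerPhi φ σ B (X p) = ∑ w, C ((σ ^ p.1) (B p.2 w)) * X (p.1, w) := by
  simp [towerPhi]

theorem towerPhi_towerTrunc (d : ℕ) (f : TowerRing K V) :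
    towerPhi φ σ B (towerTrunc K V d f) = towerTrunc K V d (towerPhi φ σ B f) := by
  suffices H : (towerPhi φ σ B).comp (towerTrunc K V d : TowerRing K V →+* TowerRing K V) =
      (towerTrunc K V d : TowerRing K V →+* TowerRing K V).comp (towerPhi φ σ B) from
    RingHom.congr_fun H f
  refine ringHom_ext (fun a => by simp) fun p => ?_
  by_cases h : p.1 < d <;> simp [h]

theorem constantCoeff_towerPhi (f : TowerRing K V) :
    constantCoeff (towerPhi φ σ B f) = φ (constantCoeff f) := by
  suffices H : constantCoeff.comp (towerPhi φ σ B) = φ.comp constantCoeff from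
    RingHom.congr_fun H f
  exact ringHom_ext (fun a => by simp) fun p => by simp

variable {φ σ}

theorem towerPhi_towerSigma (hcomm : φ.comp σ = σ.comp φ) (f : TowerRing K V) :
    towerPhi φ σ B (towerSigma V σ f) = towerSigma V σ (towerPhi φ σ B f) := by
  suffices H : (towerPhi φ σ B).comp (towerSigma V σ) =
      (towerSigma V σ).comp (towerPhi φ σ B) from RingHom.congr_fun H f
  refine ringHom_ext (fun a => ?_) fun p => ?_
  · simpa using RingHom.congr_fun hcomm a
  · simp [pow_succ']

end Operators

theorem towerTrunc_towerTrunc {d e : ℕ} (h : d ≤ e) (f : TowerRing K V) :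
    towerTrunc K V e (towerTrunc K V d f) = towerTrunc K V d f := by
  suffices H : (towerTrunc K V e).comp (towerTrunc K V d) = towerTrunc K V d from
    DFunLike.congr_fun H f
  refine algHom_ext fun p => ?_
  by_cases hp : p.1 < d
  · simp [hp, hp.trans_le h]
  · simp [hp]

theorem eventually_towerTrunc_eq (f : TowerRing K V) :
    ∀ᶠ d in Filter.atTop, towerTrunc K V d f = f := by
  induction f using MvPolynomial.induction_on with
  | C a => exact .of_forall fun d => towerTrunc_C d a
  | add f g hf hg =>
    filter_upwards [hf, hg] with d hf hg
    rw [map_add, hf, hg]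
  | mul_X f p hf =>
    filter_upwards [hf, Filter.eventually_gt_atTop p.1] with d hf hp
    rw [map_mul, hf, towerTrunc_X, if_pos hp]

theorem towerTrunc_zero (f : TowerRing K V) : towerTrunc K V 0 f = C (constantCoeff f) := by
  suffices H : (towerTrunc K V 0 : TowerRing K V →+* TowerRing K V) = C.comp constantCoeff from
    RingHom.congr_fun H f
  exact ringHom_ext (fun a => by simp) fun p => by simp

end TowerRing

section Stages

open MvPolynomial

variable {K V : Type*} [CommRing K]

/-- The comparison of the universal ring with polynomials in the level `d` over a quotient that
carries the levels below `d`. -/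
noncomputable def levelSplit (d : ℕ) (m : Ideal (TowerRing K V)) :
    TowerRing K V →+* MvPolynomial V (TowerRing K V ⧸ m) :=
  eval₂Hom (C.comp ((Ideal.Quotient.mk m).comp C)) fun p =>
    if p.1 < d then C (Ideal.Quotient.mk m (X p)) else if p.1 = d then X p.2 else 0

/-- Compatibility of a stage `m` on the levels below `d` with a stage `m'` on the levels below
`d + 1`: both the inclusion of levels and `σ` map the first into the second. -/
def IsLink (σ : K →+* K) (d : ℕ) (m m' : Ideal (TowerRing K V)) : Prop :=
  m ≤ m'.comap (towerTrunc K V d) ∧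
    m ≤ m'.comap ((towerSigma V σ).comp (towerTrunc K V d : TowerRing K V →+* TowerRing K V))

namespace IsLink

variable {σ : K →+* K} {d : ℕ} {m m' : Ideal (TowerRing K V)} (hl : IsLink σ d m m')

/-- The map of quotients induced by the inclusion of the levels below `d`. -/
noncomputable def incl : TowerRing K V ⧸ m →+* TowerRing K V ⧸ m' := Ideal.quotientMap m' _ hl.1

/-- The map of quotients induced by `σ`. -/
noncomputable def shift : TowerRing K V ⧸ m →+* TowerRing K V ⧸ m' := Ideal.quotientMap m' _ hl.2

theorem incl_mk (f : TowerRing K V) :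
    hl.incl (Ideal.Quotient.mk m f) = Ideal.Quotient.mk m' (towerTrunc K V d f) := rfl

theorem shift_mk (f : TowerRing K V) :
    hl.shift (Ideal.Quotient.mk m f) =
      Ideal.Quotient.mk m' (towerSigma V σ (towerTrunc K V d f)) := rfl

end IsLink

variable {σ : K →+* K} {d : ℕ} {m m' : Ideal (TowerRing K V)}

theorem levelSplit_towerTrunc (hX : ∀ p : ℕ × V, d ≤ p.1 → X p ∈ m) (f : TowerRing K V) :
    levelSplit d m (towerTrunc K V d f) = C (Ideal.Quotient.mk m f) := by
  suffices H : (levelSplit d m).comp (towerTrunc K V d : TowerRing K V →+* TowerRing K V) =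
      C.comp (Ideal.Quotient.mk m) from RingHom.congr_fun H f
  refine ringHom_ext (fun a => ?_) fun p => ?_
  · simp [levelSplit]
  · rcases lt_or_ge p.1 d with hp | hp
    · simp [levelSplit, hp]
    · simp [hp.not_gt, Ideal.Quotient.eq_zero_iff_mem.2 (hX p hp)]

theorem IsLink.eval₂_levelSplit (hl : IsLink σ d m m')
    (hX : ∀ p : ℕ × V, d + 1 ≤ p.1 → X p ∈ m') (f : TowerRing K V) :
    eval₂Hom hl.incl (fun v => Ideal.Quotient.mk m' (X (d, v))) (levelSplit d m f) =
      Ideal.Quotient.mk m' f := by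
  suffices H : (eval₂Hom hl.incl fun v => Ideal.Quotient.mk m' (X (d, v))).comp (levelSplit d m) =
      Ideal.Quotient.mk m' from RingHom.congr_fun H f
  refine ringHom_ext (fun a => ?_) fun p => ?_
  · simp [levelSplit, hl.incl_mk]
  · rcases lt_trichotomy p.1 d with hp | rfl | hp
    · simp [levelSplit, hp, hl.incl_mk]
    · simp [levelSplit]
    · simp [levelSplit, hp.ne', hp.not_gt, Ideal.Quotient.eq_zero_iff_mem.2 (hX p hp)]

theorem IsLink.levelSplit_towerSigma (hl : IsLink σ d m m') (f : TowerRing K V) :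
    levelSplit (d + 1) m' (towerSigma V σ (towerTrunc K V (d + 1) f)) =
      map hl.shift (levelSplit d m f) := by
  suffices H : ((levelSplit (d + 1) m').comp (towerSigma V σ)).comp
      (towerTrunc K V (d + 1) : TowerRing K V →+* TowerRing K V) =
      (map hl.shift).comp (levelSplit d m) from RingHom.congr_fun H f
  refine ringHom_ext (fun a => ?_) fun p => ?_
  · simp [levelSplit, hl.shift_mk]
  · rcases lt_trichotomy p.1 d with hp | rfl | hp
    · simp [levelSplit, hp, hl.shift_mk, hp.trans d.lt_succ_self]
    · simp [levelSplit]
    · simp [levelSplit, hp.ne', hp.not_gt, hp.not_ge]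

/-- The ideal generated by the conditions that link a stage above level `d + 1` to the stage `m'`
below it. -/
noncomputable def nextIdeal (σ : K →+* K) (d : ℕ) (m' : Ideal (TowerRing K V)) :
    Ideal (TowerRing K V) :=
  m'.map (towerTrunc K V (d + 1)) ⊔
    m'.map ((towerSigma V σ).comp (towerTrunc K V (d + 1) : TowerRing K V →+* TowerRing K V)) ⊔
    Ideal.span (X '' {p | d + 2 ≤ p.1})

variable [Fintype V] {φ : K →+* K} {B : Matrix V V K}

theorem isDiffIdeal_nextIdeal (hcomm : φ.comp σ = σ.comp φ)
    (hm' : IsDiffIdeal (towerPhi φ σ B) m') :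
    IsDiffIdeal (towerPhi φ σ B) (nextIdeal σ d m') := by
  refine ((hm'.map fun f => ?_).sup (hm'.map fun f => ?_)).sup (isDiffIdeal_span ?_)
  · exact towerPhi_towerTrunc φ σ B _ f
  · exact (towerPhi_towerSigma B hcomm _).trans
      (congrArg _ (towerPhi_towerTrunc φ σ B (d + 1) f))
  · rintro _ ⟨p, hp, rfl⟩
    rw [towerPhi_X]
    exact sum_mem fun w _ => Ideal.mul_mem_left _ _ (Ideal.subset_span ⟨(p.1, w), hp, rfl⟩)

/-- A stage on the levels below `d`: a maximal difference ideal that kills the higher levels. -/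
def IsStage (φ σ : K →+* K) (B : Matrix V V K) (d : ℕ) (m : Ideal (TowerRing K V)) : Prop :=
  IsMaximalDiffIdeal (towerPhi φ σ B) m ∧ ∀ p : ℕ × V, d ≤ p.1 → X p ∈ m

variable [DecidableEq V]

/-- The relations defining the stage `m'` over `m` remain consistent after the scalars are
extended along `σ`. -/
theorem IsLink.map_ker_ne_top (hl : IsLink σ d m m') (hB : IsUnit B.det)
    (hm : IsStage φ σ B d m) (hm' : IsStage φ σ B (d + 1) m') :
    (RingHom.ker (eval₂Hom hl.incl fun v => Ideal.Quotient.mk m' (X (d, v)))).map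
      (map hl.shift) ≠ ⊤ := by
  have : Nontrivial (TowerRing K V ⧸ m') := Ideal.Quotient.nontrivial_iff.2 hm'.1.1.2
  let c : K →+* TowerRing K V ⧸ m := (Ideal.Quotient.mk m).comp (C.comp (σ ^ d))
  have hM : IsUnit (c.mapMatrix B).det := by
    rw [← RingHom.map_det]
    exact hB.map c
  refine hm.1.diffSimple_quotient.map_ne_top hM (isDiffIdeal_ker_eval₂Hom
    (ψ := Ideal.quotientMap m' _ hm'.1.1.1) (fun a => ?_) fun v => ?_) (RingHom.ker_ne_top _)
  · obtain ⟨a, rfl⟩ := Ideal.Quotient.mk_surjective a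
    exact congrArg (Ideal.Quotient.mk m') (towerPhi_towerTrunc φ σ B d a)
  · exact (congrArg (Ideal.Quotient.mk m') (towerPhi_X φ σ B (d, v))).trans
      (by simp [c, hl.incl_mk])

theorem IsLink.nextIdeal_ne_top (hl : IsLink σ d m m') (hB : IsUnit B.det)
    (hm : IsStage φ σ B d m) (hm' : IsStage φ σ B (d + 1) m') : nextIdeal σ d m' ≠ ⊤ := by
  set I := (RingHom.ker (eval₂Hom hl.incl fun v => Ideal.Quotient.mk m' (X (d, v)))).map
    (map hl.shift)
  have hle : nextIdeal σ d m' ≤ I.comap (levelSplit (d + 1) m') := by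
    refine sup_le (sup_le (Ideal.map_le_iff_le_comap.2 fun f hf => ?_)
      (Ideal.map_le_iff_le_comap.2 fun f hf => ?_)) (Ideal.span_le.2 ?_)
    · change levelSplit (d + 1) m' (towerTrunc K V (d + 1) f) ∈ I
      rw [levelSplit_towerTrunc hm'.2, Ideal.Quotient.eq_zero_iff_mem.2 hf, map_zero]
      exact I.zero_mem
    · change levelSplit (d + 1) m' (towerSigma V σ (towerTrunc K V (d + 1) f)) ∈ I
      rw [hl.levelSplit_towerSigma]
      refine Ideal.mem_map_of_mem _ ?_
      rw [RingHom.mem_ker, hl.eval₂_levelSplit hm'.2, Ideal.Quotient.eq_zero_iff_mem.2 hf]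
    · rintro _ ⟨p, hp : d + 2 ≤ p.1, rfl⟩
      change levelSplit (d + 1) m' (X p) ∈ I
      rw [levelSplit, coe_eval₂Hom, eval₂_X, if_neg (by lia), if_neg (by lia)]
      exact I.zero_mem
  intro h1
  rw [h1, top_le_iff, Ideal.comap_eq_top_iff] at hle
  exact hl.map_ker_ne_top hB hm hm' hle

theorem IsLink.exists_next (hl : IsLink σ d m m') (hcomm : φ.comp σ = σ.comp φ)
    (hB : IsUnit B.det) (hm : IsStage φ σ B d m) (hm' : IsStage φ σ B (d + 1) m') :
    ∃ m'', IsStage φ σ B (d + 2) m'' ∧ IsLink σ (d + 1) m' m'' := by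
  obtain ⟨m'', hle, hm''⟩ := (isDiffIdeal_nextIdeal (d := d) hcomm
    hm'.1.1.1).exists_le_isMaximalDiffIdeal (hl.nextIdeal_ne_top hB hm hm')
  rw [nextIdeal, sup_le_iff, sup_le_iff, Ideal.map_le_iff_le_comap,
    Ideal.map_le_iff_le_comap] at hle
  exact ⟨m'', ⟨hm'', fun p hp => hle.2 (Ideal.subset_span ⟨p, hp, rfl⟩)⟩, hle.1⟩

end Stages

section LimitOfStages

open MvPolynomial

/-- The ideal of the elements that eventually lie in all ideals of a sequence. -/
def eventualIdeal {R : Type*} [CommRing R] (m : ℕ → Ideal R) : Ideal R where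
  carrier := {f | ∀ᶠ d in Filter.atTop, f ∈ m d}
  add_mem' hf hg := (hf.and hg).mono fun _ h => add_mem h.1 h.2
  zero_mem' := .of_forall fun d => (m d).zero_mem
  smul_mem' c _ hf := hf.mono fun d h => (m d).mul_mem_left c h

theorem mem_eventualIdeal {R : Type*} [CommRing R] {m : ℕ → Ideal R} {f : R} :
    f ∈ eventualIdeal m ↔ ∀ᶠ d in Filter.atTop, f ∈ m d := Iff.rfl

variable {K V : Type*} [CommRing K] {σ : K →+* K} {m : ℕ → Ideal (TowerRing K V)}

theorem isDiffIdeal_towerSigma_eventualIdeal (hl : ∀ d, IsLink σ d (m d) (m (d + 1))) :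
    IsDiffIdeal (towerSigma V σ) (eventualIdeal m) := fun f hf => by
  rw [mem_eventualIdeal, ← Filter.map_add_atTop_eq_nat 1, Filter.eventually_map]
  filter_upwards [hf, eventually_towerTrunc_eq f] with d hf hd
  have := (hl d).2 hf
  rwa [Ideal.mem_comap, RingHom.comp_apply, RingHom.coe_coe, hd] at this

theorem towerTrunc_mem_eventualIdeal (hl : ∀ d, IsLink σ d (m d) (m (d + 1))) {d : ℕ}
    {f : TowerRing K V} (hf : f ∈ m d) : towerTrunc K V d f ∈ eventualIdeal m := by
  refine Filter.eventually_atTop.2 ⟨d + 1, fun e he => ?_⟩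
  induction e, he using Nat.le_induction with
  | base => exact (hl d).1 hf
  | succ e he ih =>
    have := (hl e).1 ih
    rwa [Ideal.mem_comap, towerTrunc_towerTrunc (by lia)] at this

variable [Fintype V] {φ : K →+* K} {B : Matrix V V K}

theorem isDiffIdeal_towerPhi_eventualIdeal (hm : ∀ d, IsStage φ σ B d (m d)) :
    IsDiffIdeal (towerPhi φ σ B) (eventualIdeal m) := fun f hf =>
  hf.mono fun d => (hm d).1.1.1 f

theorem eventualIdeal_ne_top (hm : ∀ d, IsStage φ σ B d (m d)) : eventualIdeal m ≠ ⊤ := by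
  rw [Ne, Ideal.eq_top_iff_one]
  intro h
  obtain ⟨d, hd⟩ := (mem_eventualIdeal.1 h).exists
  exact (hm d).1.1.2 ((Ideal.eq_top_iff_one _).2 hd)

theorem exists_isStage_one {𝔟 : Ideal (MvPolynomial V K)}
    (h𝔟 : IsDiffIdeal (linearTwist φ B) 𝔟) (h1 : 𝔟 ≠ ⊤) :
    ∃ m₁, IsStage φ σ B 1 m₁ ∧ ∀ r ∈ 𝔟, rename (Prod.mk 0) r ∈ m₁ := by
  let π : TowerRing K V →ₐ[K] MvPolynomial V K := aeval fun p => if p.1 = 0 then X p.2 else 0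
  have hπφ : ∀ f, π (towerPhi φ σ B f) = linearTwist φ B (π f) := fun f => by
    suffices H : (π : TowerRing K V →+* MvPolynomial V K).comp (towerPhi φ σ B) =
        (linearTwist φ B).comp π from RingHom.congr_fun H f
    refine ringHom_ext (fun a => by simp [linearTwist_C]) fun p => ?_
    rcases p with ⟨_ | i, v⟩
    · simp [π, linearTwist_X, Matrix.toMvPolynomial, monomial_eq]
    · simp [π]
  have hπ : ∀ r, π (rename (Prod.mk 0) r) = r := fun r => by
    exact (aeval_rename ..).trans (aeval_X_left_apply r)
  obtain ⟨m₁, hle, hm₁⟩ := IsDiffIdeal.exists_le_isMaximalDiffIdeal (φ := towerPhi φ σ B)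
    (I := 𝔟.comap π) (fun f hf => by rw [Ideal.mem_comap, hπφ]; exact h𝔟 _ hf)
    (mt Ideal.comap_eq_top_iff.1 h1)
  refine ⟨m₁, ⟨hm₁, fun p hp => hle ?_⟩, fun r hr => hle ?_⟩
  · rw [Ideal.mem_comap, aeval_X, if_neg (by lia)]
    exact 𝔟.zero_mem
  · rwa [Ideal.mem_comap, hπ]

end LimitOfStages

section FieldStages

open MvPolynomial

variable {K V : Type*} [Field K] [Fintype V] {φ σ : K →+* K} {B : Matrix V V K}

theorem isStage_zero : IsStage φ σ B 0 (RingHom.ker (constantCoeff (σ := ℕ × V) (R := K))) := by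
  have hmax : (RingHom.ker (constantCoeff (σ := ℕ × V) (R := K))).IsMaximal :=
    RingHom.ker_isMaximal_of_surjective _ fun a => ⟨C a, constantCoeff_C _ a⟩
  refine ⟨⟨⟨fun f hf => ?_, hmax.ne_top⟩, fun J hJ hle => (hmax.eq_of_le hJ.2 hle).ge⟩,
    fun p _ => constantCoeff_X K p⟩
  rw [RingHom.mem_ker] at hf ⊢
  rw [constantCoeff_towerPhi, hf, map_zero]

theorem exists_stages [DecidableEq V] (hcomm : φ.comp σ = σ.comp φ) (hB : IsUnit B.det)
    {m₁ : Ideal (TowerRing K V)} (hm₁ : IsStage φ σ B 1 m₁) :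
    ∃ m : ℕ → Ideal (TowerRing K V), (∀ d, IsStage φ σ B d (m d)) ∧
      (∀ d, IsLink σ d (m d) (m (d + 1))) ∧ m 1 = m₁ := by
  let Q (d : ℕ) (q : Ideal (TowerRing K V) × Ideal (TowerRing K V)) : Prop :=
    IsStage φ σ B d q.1 ∧ IsStage φ σ B (d + 1) q.2 ∧ IsLink σ d q.1 q.2
  have hstep : ∀ d q, Q d q → ∃ q', Q (d + 1) q' ∧ q'.1 = q.2 := fun d q ⟨h, h', hl⟩ =>
    let ⟨m'', h'', hl'⟩ := hl.exists_next hcomm hB h h'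
    ⟨(q.2, m''), ⟨h', h'', hl'⟩, rfl⟩
  choose! next hQ hnext using hstep
  let q (d : ℕ) : Ideal (TowerRing K V) × Ideal (TowerRing K V) :=
    Nat.rec (RingHom.ker constantCoeff, m₁) next d
  have hq : ∀ d, Q d (q d) := fun d => by
    induction d with
    | zero =>
      refine ⟨isStage_zero, hm₁, fun f hf => ?_, fun f hf => ?_⟩ <;>
        simp [Ideal.mem_comap, towerTrunc_zero, (RingHom.mem_ker ..).1 hf]
    | succ d ih => exact hQ d _ ih
  have hsucc : ∀ d, (q (d + 1)).1 = (q d).2 := fun d => hnext d _ (hq d)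
  refine ⟨fun d => (q d).1, fun d => (hq d).1, fun d => ?_, hsucc 0⟩
  simpa only [hsucc] using (hq d).2.2

end FieldStages

section Tower

open MvPolynomial

variable {K V S : Type*} [CommRing K] [CommRing S] [Algebra K S]

/-- The subalgebra generated by the elements of level below `d`. -/
def stageAlg (K : Type*) {V S : Type*} [CommRing K] [CommRing S] [Algebra K S] (x : ℕ × V → S)
    (d : ℕ) : Subalgebra K S :=
  Algebra.adjoin K (x '' {p | p.1 < d})

theorem gen_mem_stageAlg (x : ℕ × V → S) {p : ℕ × V} {d : ℕ} (h : p.1 < d) :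
    x p ∈ stageAlg K x d :=
  Algebra.subset_adjoin ⟨p, h, rfl⟩

theorem stageAlg_mono (x : ℕ × V → S) : Monotone (stageAlg K x) := fun _ _ h =>
  Algebra.adjoin_mono (Set.image_mono fun _ hp => lt_of_lt_of_le hp h)

theorem stageAlg_le_iff {x : ℕ × V → S} {d : ℕ} {T : Subalgebra K S} :
    stageAlg K x d ≤ T ↔ ∀ p : ℕ × V, p.1 < d → x p ∈ T :=
  Algebra.adjoin_le_iff.trans Set.forall_mem_image

theorem map_mem_stageAlg {x : ℕ × V → S} {τ : S →+* S} {σ : K →+* K}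
    (h : ∀ a, τ (algebraMap K S a) = algebraMap K S (σ a)) {d e : ℕ}
    (hx : ∀ p : ℕ × V, p.1 < d → τ (x p) ∈ stageAlg K x e) {a : S} (ha : a ∈ stageAlg K x d) :
    τ a ∈ stageAlg K x e := by
  induction ha using Algebra.adjoin_induction with
  | mem y hy =>
    obtain ⟨p, hp, rfl⟩ := hy
    exact hx p hp
  | algebraMap r => rw [h]; exact Subalgebra.algebraMap_mem _ _
  | add a b _ _ ha hb => rw [map_add]; exact add_mem ha hb
  | mul a b _ _ ha hb => rw [map_mul]; exact mul_mem ha hb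

theorem aeval_towerTrunc_mem_stageAlg (x : ℕ × V → S) (d : ℕ) (f : TowerRing K V) :
    aeval x (towerTrunc K V d f) ∈ stageAlg K x d := by
  suffices H : ((aeval x).comp (towerTrunc K V d)).range ≤ stageAlg K x d from H ⟨f, rfl⟩
  have : (aeval x).comp (towerTrunc K V d) =
      aeval fun p : ℕ × V => if p.1 < d then x p else 0 :=
    algHom_ext fun p => by by_cases hp : p.1 < d <;> simp [hp]
  rw [this, ← Algebra.adjoin_range_eq_range_aeval, Algebra.adjoin_le_iff]
  rintro _ ⟨p, rfl⟩
  by_cases hp : p.1 < d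
  · simpa [hp] using gen_mem_stageAlg x hp
  · simp [hp]

/-- The evaluation of truncated polynomials in the generators of a stage. -/
noncomputable def stageEval (x : ℕ × V → S) (d : ℕ) : TowerRing K V →ₐ[K] stageAlg K x d :=
  ((aeval x).comp (towerTrunc K V d)).codRestrict _ (aeval_towerTrunc_mem_stageAlg x d)

theorem stageEval_surjective (x : ℕ × V → S) (d : ℕ) :
    Function.Surjective (stageEval (K := K) x d) := by
  have hle : stageAlg K x d ≤ ((aeval x).comp (towerTrunc K V d)).range :=
    stageAlg_le_iff.2 fun p hp => ⟨X p, by simp [hp]⟩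
  rintro ⟨a, ha⟩
  obtain ⟨f, hf⟩ := hle ha
  exact ⟨f, Subtype.ext hf⟩

theorem aeval_quotientMk_X (M : Ideal (TowerRing K V)) (f : TowerRing K V) :
    aeval (fun p => Ideal.Quotient.mk M (X p)) f = Ideal.Quotient.mk M f :=
  (DFunLike.congr_fun (aeval_unique (Ideal.Quotient.mkₐ K M)) f).symm

variable [Fintype V]

/-- A `φσ`-algebra generated over `K` by the `σ`-orbit of a solution of the linear difference
system with matrix `B`; `x (i, v)` is the `v`-th coordinate of `σⁱ` of the solution. -/
structure IsTower (φ σ : K →+* K) (B : Matrix V V K) (Φ τ : S →+* S) (x : ℕ × V → S) :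
    Prop where
  comm : ∀ a, Φ (τ a) = τ (Φ a)
  phi_algebraMap : ∀ a, Φ (algebraMap K S a) = algebraMap K S (φ a)
  sigma_algebraMap : ∀ a, τ (algebraMap K S a) = algebraMap K S (σ a)
  sigma_gen : ∀ d v, τ (x (d, v)) = x (d + 1, v)
  phi_gen : ∀ p : ℕ × V, Φ (x p) = ∑ w, algebraMap K S ((σ ^ p.1) (B p.2 w)) * x (p.1, w)
  exists_mem_stageAlg : ∀ a, ∃ d, a ∈ stageAlg K x d

variable {φ σ : K →+* K} {B : Matrix V V K} {Φ τ : S →+* S} {x : ℕ × V → S}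

theorem isTower_quotient (hcomm : φ.comp σ = σ.comp φ) {M : Ideal (TowerRing K V)}
    (hφ : IsDiffIdeal (towerPhi φ σ B) M) (hσ : IsDiffIdeal (towerSigma V σ) M) :
    IsTower φ σ B (Ideal.quotientMap M _ hφ) (Ideal.quotientMap M _ hσ)
      fun p => Ideal.Quotient.mk M (X p) where
  comm a := by
    obtain ⟨f, rfl⟩ := Ideal.Quotient.mk_surjective a
    exact congrArg (Ideal.Quotient.mk M) (towerPhi_towerSigma B hcomm f)
  phi_algebraMap a := congrArg (Ideal.Quotient.mk M) (towerPhi_C φ σ B a)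
  sigma_algebraMap a := congrArg (Ideal.Quotient.mk M) (towerSigma_C σ a)
  sigma_gen d v := congrArg (Ideal.Quotient.mk M) (towerSigma_X σ (d, v))
  phi_gen p := by
    refine (congrArg (Ideal.Quotient.mk M) (towerPhi_X φ σ B p)).trans ?_
    rw [map_sum]
    exact Finset.sum_congr rfl fun w _ => map_mul ..
  exists_mem_stageAlg a := by
    obtain ⟨f, rfl⟩ := Ideal.Quotient.mk_surjective a
    obtain ⟨d, hd⟩ := (eventually_towerTrunc_eq f).exists
    refine ⟨d, ?_⟩
    have := aeval_towerTrunc_mem_stageAlg (fun p => Ideal.Quotient.mk M (X p)) d f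
    rwa [hd, aeval_quotientMk_X] at this

namespace IsTower

variable (h : IsTower φ σ B Φ τ x)
include h

theorem mem_of_gen_mem {T : Subring S} (hK : ∀ a, algebraMap K S a ∈ T) (hx : ∀ p, x p ∈ T)
    (s : S) : s ∈ T := by
  obtain ⟨d, hd⟩ := h.exists_mem_stageAlg s
  let T' : Subalgebra K S := { T with algebraMap_mem' := hK }
  exact (stageAlg_le_iff (T := T')).2 (fun p _ => hx p) hd

theorem sigma_pow_gen (i : ℕ) (v : V) : (τ ^ i) (x (0, v)) = x (i, v) := by
  induction i with
  | zero => rfl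
  | succ i ih => rw [pow_succ', RingHom.mul_def, RingHom.comp_apply, ih, h.sigma_gen]

theorem phi_aeval (f : TowerRing K V) : Φ (aeval x f) = aeval x (towerPhi φ σ B f) := by
  suffices H : Φ.comp (aeval x).toRingHom = (aeval x).toRingHom.comp (towerPhi φ σ B) from
    RingHom.congr_fun H f
  exact ringHom_ext (fun a => by simp [h.phi_algebraMap]) fun p => by simp [h.phi_gen]

theorem phi_mem_stageAlg (d : ℕ) (a : S) (ha : a ∈ stageAlg K x d) : Φ a ∈ stageAlg K x d :=
  map_mem_stageAlg h.phi_algebraMap (fun p hp => by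
    rw [h.phi_gen]
    exact sum_mem fun w _ => mul_mem (Subalgebra.algebraMap_mem _ _)
      (gen_mem_stageAlg x (p := (p.1, w)) hp)) ha

omit h in
/-- The difference operator of a stage. -/
def stagePhi (h : IsTower φ σ B Φ τ x) (d : ℕ) : stageAlg K x d →+* stageAlg K x d :=
  Φ.restrict (stageAlg K x d) (stageAlg K x d) (h.phi_mem_stageAlg d)

theorem diffSimple_stagePhi [Nontrivial S] {d : ℕ} {m : Ideal (TowerRing K V)}
    (hm : IsMaximalDiffIdeal (towerPhi φ σ B) m)
    (hx : ∀ f ∈ m, aeval x (towerTrunc K V d f) = 0) : DiffSimple (h.stagePhi d) := by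
  refine hm.diffSimple_of_surjective (f := (stageEval x d).toRingHom) (stageEval_surjective x d)
    (fun f => Subtype.ext ?_) fun f hf => Subtype.ext (hx f hf)
  change Φ (aeval x (towerTrunc K V d f)) = aeval x (towerTrunc K V d (towerPhi φ σ B f))
  rw [h.phi_aeval, towerPhi_towerTrunc]

end IsTower

/-- A tower all of whose finite stages are `φ`-simple. -/
structure IsSimpleTower (φ σ : K →+* K) (B : Matrix V V K) (Φ τ : S →+* S) (x : ℕ × V → S) :
    Prop extends IsTower φ σ B Φ τ x where
  simple_stage : ∀ d, DiffSimple (toIsTower.stagePhi d)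

theorem exists_isSimpleTower.{u, v} {K : Type u} {V : Type v} [Field K] [Fintype V]
    [DecidableEq V] {φ σ : K →+* K} (hcomm : φ.comp σ = σ.comp φ) {B : Matrix V V K}
    (hB : IsUnit B.det) {𝔟 : Ideal (MvPolynomial V K)} (h𝔟 : IsDiffIdeal (linearTwist φ B) 𝔟)
    (h1 : 𝔟 ≠ ⊤) :
    ∃ (S : Type max u v) (_ : CommRing S) (_ : Algebra K S) (Φ τ : S →+* S) (x : ℕ × V → S),
      IsSimpleTower φ σ B Φ τ x ∧ ∀ r ∈ 𝔟, aeval (fun v => x (0, v)) r = 0 := by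
  obtain ⟨m₁, hm₁, h𝔟m₁⟩ := exists_isStage_one (σ := σ) h𝔟 h1
  obtain ⟨m, hm, hl, rfl⟩ := exists_stages hcomm hB hm₁
  set M := eventualIdeal m
  have := Ideal.Quotient.nontrivial_iff.2 (eventualIdeal_ne_top hm)
  have htower := isTower_quotient hcomm (isDiffIdeal_towerPhi_eventualIdeal hm)
    (isDiffIdeal_towerSigma_eventualIdeal hl)
  have hzero : ∀ d, ∀ f ∈ m d,
      aeval (fun p => Ideal.Quotient.mk M (X p)) (towerTrunc K V d f) = 0 := fun d f hf => by
    rw [aeval_quotientMk_X]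
    exact Ideal.Quotient.eq_zero_iff_mem.2 (towerTrunc_mem_eventualIdeal hl hf)
  refine ⟨_, inferInstance, inferInstance, _, _, _,
    ⟨htower, fun d => htower.diffSimple_stagePhi (hm d).1 (hzero d)⟩, fun r hr => ?_⟩
  have htrunc : (towerTrunc K V 1).comp (rename (Prod.mk 0)) = rename (Prod.mk 0) :=
    algHom_ext fun v => by simp
  rw [← hzero 1 _ (h𝔟m₁ r hr), ← AlgHom.comp_apply (towerTrunc K V 1), htrunc, aeval_rename]
  rfl

end Tower

section Constants

open Polynomial PrimeSpectrum

/-- The field of constants `K^φ`. -/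
abbrev fixedField {K : Type*} [Field K] (φ : K →+* K) : Subfield K :=
  φ.eqLocusField (RingHom.id K)

theorem isAlgClosed_fixedField {K : Type*} [Field K] {φ : K →+* K}
    (h : ∀ p : K[X], (∀ m : ℕ, φ (p.coeff m) = p.coeff m) → 0 < p.degree →
      ∃ a : K, φ a = a ∧ p.eval a = 0) : IsAlgClosed (fixedField φ) :=
  IsAlgClosed.of_exists_root _ fun p _ hp => by
    obtain ⟨a, ha, h0⟩ := h (p.map (fixedField φ).subtype)
      (fun m => by rw [coeff_map]; exact (p.coeff m).2) (by simpa using hp.degree_pos)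
    refine ⟨⟨a, ha⟩, Subtype.ext ?_⟩
    rw [eval_map] at h0
    exact (hom_eval₂ p (RingHom.id _) (fixedField φ).subtype ⟨a, ha⟩).trans h0

theorem exists_isRoot_of_map_eq {K : Type*} [Field K] {φ : K →+* K} [IsAlgClosed (fixedField φ)]
    {p : K[X]} (hp : p.map φ = p) (hdeg : p.degree ≠ 0) : ∃ a, φ a = a ∧ p.IsRoot a := by
  obtain ⟨q, rfl⟩ : ∃ q : (fixedField φ)[X], q.map (fixedField φ).subtype = p :=
    (mem_lifts p).1 <| (lifts_iff_coeff_lifts p).2 fun m =>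
      ⟨⟨p.coeff m, (coeff_map φ m).symm.trans (congrArg (coeff · m) hp)⟩, rfl⟩
  obtain ⟨a, ha⟩ := IsAlgClosed.exists_root q (by rwa [degree_map] at hdeg)
  exact ⟨a, a.2, ha.map (f := (fixedField φ).subtype)⟩

theorem infinite_setOf_fixed {K : Type*} [Field K] (φ : K →+* K) [IsAlgClosed (fixedField φ)] :
    {a | φ a = a}.Infinite :=
  Set.infinite_coe_iff.1 (IsAlgClosed.instInfinite (K := fixedField φ))

theorem exists_basicOpen_subset_of_isConstructible {R : Type*} [CommRing R] [IsDomain R]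
    {s : Set (PrimeSpectrum R)} (hs : Topology.IsConstructible s) (hbot : ⊥ ∈ s) :
    ∃ f : R, f ≠ 0 ∧ ↑(basicOpen f) ⊆ s := by
  obtain ⟨D, rfl⟩ := exists_constructibleSetData_iff.2 hs
  obtain ⟨C, hC, hmem⟩ := Set.mem_iUnion₂.1 hbot
  have hg : ∀ i, C.g i = 0 := fun i => by simpa using hmem.1 (Set.mem_range_self i)
  refine ⟨C.f, fun h => hmem.2 (by simp [h]), fun P hP => Set.mem_iUnion₂.2 ⟨C, hC, ?_, ?_⟩⟩
  · rintro _ ⟨i, rfl⟩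
    exact hg i ▸ zero_mem P.asIdeal
  · exact fun h => hP (h rfl)

theorem exists_basicOpen_subset_range_comap {R S : Type*} [CommRing R] [IsDomain R] [CommRing S]
    {f : R →+* S} (hf : f.FinitePresentation) (hinj : Function.Injective f) :
    ∃ r : R, r ≠ 0 ∧ ↑(basicOpen r) ⊆ Set.range (comap f) := by
  refine exists_basicOpen_subset_of_isConstructible (isConstructible_range_comap hf) ?_
  obtain ⟨q, hq, hqb⟩ := Ideal.exists_comap_eq_of_mem_minimalPrimes_of_injective hinj ⊥
    (by simp [IsDomain.minimalPrimes_eq_singleton_bot])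
  exact ⟨⟨q, hq⟩, PrimeSpectrum.ext hqb⟩

theorem exists_forall_not_isUnit_sub {K A : Type*} [Field K] [CommRing A] [Algebra K A]
    [Algebra.FiniteType K A] {c : A} (hc : Transcendental K c) :
    ∃ s : Set K, s.Finite ∧ ∀ a ∉ s, ¬ IsUnit (c - algebraMap K A a) := by
  have hf : (aeval c : K[X] →ₐ[K] A).toRingHom.FinitePresentation := by
    refine RingHom.FinitePresentation.of_finiteType.1
      (RingHom.FiniteType.of_comp_finiteType (f := algebraMap K K[X]) ?_)
    rw [AlgHom.toRingHom_eq_coe, AlgHom.comp_algebraMap]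
    exact RingHom.finiteType_algebraMap.2 inferInstance
  obtain ⟨r, hr, hrange⟩ := exists_basicOpen_subset_range_comap hf
    (transcendental_iff_injective.1 hc)
  refine ⟨{a | r.IsRoot a}, finite_setOfPred_isRoot hr, fun a ha hu => ?_⟩
  obtain ⟨q, hq⟩ := @hrange ⟨Ideal.span {X - C a},
    (Ideal.span_singleton_prime (X_sub_C_ne_zero a)).2 (prime_X_sub_C a)⟩
    fun h => ha (dvd_iff_isRoot.1 (Ideal.mem_span_singleton.1 h))
  have hmem : X - C a ∈ q.asIdeal.comap (aeval c : K[X] →ₐ[K] A).toRingHom := by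
    rw [← comap_asIdeal, hq]
    exact Ideal.mem_span_singleton_self _
  exact q.2.ne_top (Ideal.eq_top_of_isUnit_mem _ (by simpa using hmem) hu)

theorem not_isUnit_sub_of_isRoot_minpoly {K A : Type*} [Field K] [Ring A] [Algebra K A] {c : A}
    (hc : IsIntegral K c) {a : K} (ha : (minpoly K c).IsRoot a) :
    ¬ IsUnit (c - algebraMap K A a) := by
  intro hu
  obtain ⟨q, hq⟩ := dvd_iff_isRoot.2 ha
  have hroot : (c - algebraMap K A a) * aeval c q = 0 := by
    simpa [hq] using minpoly.aeval K c
  have hq0 : q ≠ 0 := right_ne_zero_of_mul (hq ▸ minpoly.ne_zero hc)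
  have hdeg := natDegree_le_of_dvd (minpoly.dvd K c (hu.mul_right_eq_zero.1 hroot)) hq0
  rw [hq, natDegree_mul (X_sub_C_ne_zero a) hq0, natDegree_X_sub_C] at hdeg
  lia

theorem map_minpoly_of_fixed {K A : Type*} [Field K] [Ring A] [Algebra K A] {φ : K →+* K}
    {φA : A →+* A} (hcompat : ∀ a, φA (algebraMap K A a) = algebraMap K A (φ a)) {c : A}
    (hc : φA c = c) (hint : IsIntegral K c) : (minpoly K c).map φ = minpoly K c := by
  refine minpoly.unique K c ((minpoly.monic hint).map φ) ?_ fun q hq hq0 => ?_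
  · have hmap : (algebraMap K A).comp φ = φA.comp (algebraMap K A) :=
      (RingHom.ext hcompat).symm
    have h0 := congrArg φA (minpoly.aeval K c)
    rwa [map_zero, aeval_def, hom_eval₂, hc, ← hmap, ← eval₂_map] at h0
  · rw [degree_map]
    exact minpoly.min K c hq hq0

theorem exists_eq_algebraMap_of_fixed {K A : Type*} [Field K] [CommRing A] [Algebra K A]
    [Algebra.FiniteType K A] {φ : K →+* K} [IsAlgClosed (fixedField φ)] {φA : A →+* A}
    (hφA : DiffSimple φA) (hcompat : ∀ a, φA (algebraMap K A a) = algebraMap K A (φ a)) {c : A}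
    (hc : φA c = c) : ∃ a, φ a = a ∧ algebraMap K A a = c := by
  have := hφA.nontrivial
  obtain ⟨a, ha, hu⟩ : ∃ a, φ a = a ∧ ¬ IsUnit (c - algebraMap K A a) := by
    by_cases htr : Transcendental K c
    · obtain ⟨s, hs, hs'⟩ := exists_forall_not_isUnit_sub htr
      obtain ⟨a, ha, has⟩ := ((infinite_setOf_fixed φ).sdiff hs).nonempty
      exact ⟨a, ha, hs' a has⟩
    · have hint : IsIntegral K c := (not_not.1 htr : IsAlgebraic K c).isIntegral
      obtain ⟨a, ha, hroot⟩ := exists_isRoot_of_map_eq (map_minpoly_of_fixed hcompat hc hint)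
        (minpoly.degree_pos hint).ne'
      exact ⟨a, ha, not_isUnit_sub_of_isRoot_minpoly hint hroot⟩
  by_contra! hne
  exact hu (hφA.isUnit_of_fixed (by rw [map_sub, hc, hcompat, ha])
    (sub_ne_zero.2 (hne a ha).symm))

end Constants

section FixedPolynomials

open MvPolynomial

variable {V S : Type*} [CommRing S] {Φ : S →+* S} {N : Submodule S (MvPolynomial V S)}

theorem DiffSimple.exists_coeff_eq_one (hΦ : DiffSimple Φ) (hN : ∀ f ∈ N, map Φ f ∈ N)
    {f : MvPolynomial V S} (hf : f ∈ N) {α : V →₀ ℕ} (hα : α ∈ f.support) :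
    ∃ h ∈ N, h.support ⊆ f.support ∧ h.coeff α = 1 := by
  classical
  let J : Ideal S :=
    { carrier := {c | ∃ h ∈ N, h.support ⊆ f.support ∧ h.coeff α = c}
      add_mem' := by
        rintro _ _ ⟨h, hh, hs, rfl⟩ ⟨h', hh', hs', rfl⟩
        exact ⟨h + h', add_mem hh hh', support_add.trans (Finset.union_subset hs hs'),
          coeff_add ..⟩
      zero_mem' := ⟨0, zero_mem _, Finset.empty_subset _, coeff_zero α⟩
      smul_mem' := by
        rintro r _ ⟨h, hh, hs, rfl⟩
        exact ⟨r • h, N.smul_mem _ hh, support_smul.trans hs, coeff_smul ..⟩ }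
  have hJ : IsDiffIdeal Φ J := by
    rintro _ ⟨h, hh, hs, rfl⟩
    exact ⟨_, hN h hh, (support_map_subset _ _).trans hs, coeff_map ..⟩
  have hne : J ≠ ⊥ := fun h =>
    mem_support_iff.1 hα ((Submodule.mem_bot S).1 (h ▸ ⟨f, hf, subset_rfl, rfl⟩))
  exact (Ideal.eq_top_iff_one J).1 ((hΦ.2 J hJ).resolve_left hne)

theorem support_sub_subset_erase [DecidableEq (V →₀ ℕ)] {f g : MvPolynomial V S}
    {s : Finset (V →₀ ℕ)} (hf : f.support ⊆ s) (hg : g.support ⊆ s) {α : V →₀ ℕ}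
    (h : f.coeff α = g.coeff α) : (f - g).support ⊆ s.erase α := by
  refine Finset.subset_erase.2 ⟨fun β hβ => ?_, fun hα => ?_⟩
  · by_contra hs
    refine mem_support_iff.1 hβ ?_
    rw [coeff_sub, notMem_support_iff.1 fun h => hs (hf h),
      notMem_support_iff.1 fun h => hs (hg h), sub_self]
  · exact mem_support_iff.1 hα (by rw [coeff_sub, h, sub_self])

/-- An element of `N` of minimal support among those supported in `f`, normalised to have a
coefficient `1`, differs from its image under `Φ` by an element of smaller support. -/
theorem DiffSimple.exists_map_eq_self (hΦ : DiffSimple Φ) (hN : ∀ f ∈ N, map Φ f ∈ N)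
    {f : MvPolynomial V S} (hf : f ∈ N) (hf0 : f ≠ 0) :
    ∃ h ∈ N, map Φ h = h ∧ h.support ⊆ f.support ∧ ∃ α ∈ f.support, h.coeff α = 1 := by
  classical
  induction hs : f.support using Finset.strongInduction generalizing f with
  | H s ih =>
  subst hs
  obtain ⟨α, hα⟩ := support_nonempty.2 hf0
  obtain ⟨h, hh, hsupp, h1⟩ := hΦ.exists_coeff_eq_one hN hf hα
  by_cases hfix : map Φ h = h
  · exact ⟨h, hh, hfix, hsupp, α, hα, h1⟩
  have hlt : (map Φ h - h).support ⊆ f.support.erase α :=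
    support_sub_subset_erase ((support_map_subset _ _).trans hsupp) hsupp
      (by rw [coeff_map, h1, map_one])
  obtain ⟨g, hg, hgfix, hgs, β, hβ, hg1⟩ := ih _ (hlt.trans_ssubset (Finset.erase_ssubset hα))
    (sub_mem (hN h hh) hh) (sub_ne_zero.2 hfix) rfl
  have hle := hlt.trans (Finset.erase_subset _ _)
  exact ⟨g, hg, hgfix, hgs.trans hle, β, hle hβ, hg1⟩

theorem DiffSimple.mem_span_fixed (hΦ : DiffSimple Φ) (hN : ∀ f ∈ N, map Φ f ∈ N)
    {f : MvPolynomial V S} (hf : f ∈ N) : f ∈ Submodule.span S {g ∈ N | map Φ g = g} := by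
  classical
  induction hs : f.support using Finset.strongInduction generalizing f with
  | H s ih =>
  subst hs
  by_cases hf0 : f = 0
  · exact hf0 ▸ zero_mem _
  obtain ⟨h, hh, hfix, hsupp, α, hα, h1⟩ := hΦ.exists_map_eq_self hN hf hf0
  have hlt : (f - f.coeff α • h).support ⊆ f.support.erase α :=
    support_sub_subset_erase subset_rfl (support_smul.trans hsupp)
      (by rw [coeff_smul, h1, smul_eq_mul, mul_one])
  rw [← sub_add_cancel f (f.coeff α • h)]
  exact add_mem (ih _ (hlt.trans_ssubset (Finset.erase_ssubset hα))
      (sub_mem hf (N.smul_mem _ hh)) rfl)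
    (Submodule.smul_mem _ _ (Submodule.subset_span ⟨hh, hfix⟩))

end FixedPolynomials

section PrimeCycles

variable {S : Type*} [CommRing S] {φ : S →+* S} {t : ℕ} {P : ℕ → Ideal S}

/-- A sequence of minimal primes of exact period `t` in which pulling back along `φ` is a shift
by one step. -/
structure IsPrimeCycle (φ : S →+* S) (t : ℕ) (P : ℕ → Ideal S) : Prop where
  pos : 0 < t
  mem_minimalPrimes : ∀ i, P i ∈ minimalPrimes S
  comap_succ : ∀ i, (P (i + 1)).comap φ = P i
  eq_iff : ∀ i j, P i = P j ↔ i ≡ j [MOD t]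

theorem exists_comap_eq_minimalPrimes (hφ : Function.Injective φ) (p : minimalPrimes S) :
    ∃ q : minimalPrimes S, q.1.comap φ = p.1 := by
  obtain ⟨q, hq, hqp⟩ := Ideal.exists_comap_eq_of_mem_minimalPrimes_of_injective hφ p.1 p.2
  obtain ⟨q', hq', hle⟩ := Ideal.exists_minimalPrimes_le (I := ⊥) (J := q) bot_le
  have := hq'.1.1
  have hcomap : q'.comap φ ≤ p.1 := hqp ▸ Ideal.comap_mono hle
  exact ⟨⟨q', hq'⟩, hcomap.antisymm (p.2.2 ⟨Ideal.IsPrime.comap φ, bot_le⟩ hcomap)⟩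

theorem exists_isPrimeCycle [IsNoetherianRing S] [Nontrivial S] (hφ : Function.Injective φ) :
    ∃ t P, IsPrimeCycle φ t P := by
  choose ρ hρ using exists_comap_eq_minimalPrimes hφ
  have hinj : Function.Injective ρ := fun p q h => Subtype.ext (by rw [← hρ p, h, hρ])
  have : Finite (minimalPrimes S) := minimalPrimes.finite_of_isNoetherianRing S
  obtain ⟨m, hm⟩ := Ideal.exists_maximal S
  have := hm.isPrime
  obtain ⟨p, hp, -⟩ := Ideal.exists_minimalPrimes_le (I := ⊥) (J := m) bot_le
  have hpos : 0 < Function.minimalPeriod ρ ⟨p, hp⟩ :=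
    Function.minimalPeriod_pos_of_mem_periodicPts (hinj.mem_periodicPts _)
  refine ⟨_, fun i => (ρ^[i] ⟨p, hp⟩).1, hpos, fun i => (ρ^[i] ⟨p, hp⟩).2, fun i => ?_,
    fun i j => ?_⟩
  · rw [Function.iterate_succ_apply', hρ]
  · rw [Subtype.coe_inj, ← Function.iterate_mod_minimalPeriod_eq,
      ← Function.iterate_mod_minimalPeriod_eq (n := j)]
    exact Function.iterate_eq_iterate_iff_of_lt_minimalPeriod (Nat.mod_lt _ hpos)
      (Nat.mod_lt _ hpos)

theorem isDiffIdeal_iInf_of_periodic {I : ℕ → Ideal S} (ht : 0 < t)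
    (hI : Function.Periodic I t) (hφ : ∀ i, ∀ x ∈ I i, φ x ∈ I (i + 1)) :
    IsDiffIdeal φ (⨅ i, I i) := fun x hx => Ideal.mem_iInf.2 fun i => by
  rw [← hI, show i + t = i + t - 1 + 1 by lia]
  exact hφ _ _ (Ideal.mem_iInf.1 hx _)

theorem iInf_eq_finsetInf_of_periodic {I : ℕ → Ideal S} (ht : 0 < t)
    (hI : Function.Periodic I t) : ⨅ i, I i = (Finset.range t).inf I := by
  refine le_antisymm (Finset.le_inf fun i _ => iInf_le I i) (le_iInf fun i => ?_)
  rw [← hI.map_mod_nat]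
  exact Finset.inf_le (Finset.mem_range.2 (Nat.mod_lt _ ht))

namespace IsPrimeCycle

variable (h : IsPrimeCycle φ t P)
include h

theorem isPrime (i : ℕ) : (P i).IsPrime := (h.mem_minimalPrimes i).1.1

theorem periodic : Function.Periodic P t := fun i => (h.eq_iff _ _).2 (by simp)

theorem eq_of_le {i j : ℕ} (hle : P i ≤ P j) : P i = P j :=
  hle.antisymm ((h.mem_minimalPrimes j).2 ⟨h.isPrime i, bot_le⟩ hle)

theorem pow_mem_iff (j i : ℕ) (x : S) : (φ ^ j) x ∈ P (i + j) ↔ x ∈ P i := by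
  induction j with
  | zero => rfl
  | succ j ih => rw [pow_succ', ← ih, ← h.comap_succ (i + j)]; rfl

theorem map_mem {i : ℕ} {x : S} (hx : x ∈ P i) : φ x ∈ P (i + 1) := by
  rwa [← h.comap_succ i] at hx

theorem eq_of_forall_mk_eq (hφ : DiffSimple φ) {x y : S}
    (hxy : ∀ i, Ideal.Quotient.mk (P i) x = Ideal.Quotient.mk (P i) y) : x = y := by
  have hbot : ⨅ i, P i = ⊥ :=
    (hφ.2 _ (isDiffIdeal_iInf_of_periodic h.pos h.periodic fun i _ => h.map_mem)).resolve_right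
      fun htop => (h.isPrime 0).ne_top (top_le_iff.1 (htop ▸ iInf_le P 0))
  rw [← sub_eq_zero, ← Ideal.mem_bot, ← hbot, Ideal.mem_iInf]
  exact fun i => Ideal.Quotient.eq.1 (hxy i)

/-- The intersection of all `P k + P (k + r)` is a `φ`-ideal; were it zero, some `P k + P (k + r)`
would lie in the minimal prime `P 0`. -/
theorem isCoprime_add (hφ : DiffSimple φ) {r : ℕ} (hr : ¬ t ∣ r) (i : ℕ) :
    IsCoprime (P i) (P (i + r)) := by
  have hper : Function.Periodic (fun k => P k ⊔ P (k + r)) t := fun k => by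
    simp only [add_right_comm k t r, h.periodic _]
  have hdiff : IsDiffIdeal φ (⨅ k, P k ⊔ P (k + r)) :=
    isDiffIdeal_iInf_of_periodic h.pos hper fun k x hx => by
      obtain ⟨u, hu, v, hv, rfl⟩ := Submodule.mem_sup.1 hx
      rw [map_add, add_right_comm k 1 r]
      exact Submodule.add_mem_sup (h.map_mem hu) (h.map_mem hv)
  rcases hφ.2 _ hdiff with hbot | htop
  · rw [iInf_eq_finsetInf_of_periodic h.pos hper] at hbot
    obtain ⟨k, -, hk⟩ := (h.isPrime 0).inf_le'.1 (hbot.trans_le bot_le)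
    have heq : P (k + r) = P k := (h.eq_of_le (le_sup_right.trans hk)).trans
      (h.eq_of_le (le_sup_left.trans hk)).symm
    exact absurd (Nat.modEq_zero_iff_dvd.1
      (Nat.ModEq.add_left_cancel' k ((h.eq_iff _ _).1 heq))) hr
  · rw [Ideal.isCoprime_iff_sup_eq]
    exact top_le_iff.1 (htop.ge.trans (iInf_le _ i))

theorem pairwise_isCoprime (hφ : DiffSimple φ) : Pairwise fun i j : Fin t =>
    IsCoprime (P i) (P j) := by
  suffices H : ∀ i j : Fin t, i < j → IsCoprime (P i) (P j) from fun i j hij =>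
    hij.lt_or_gt.elim (H i j) fun hlt => (H j i hlt).symm
  intro i j hij
  have := h.isCoprime_add hφ (Nat.not_dvd_of_pos_of_lt (Nat.sub_pos_of_lt hij)
    ((Nat.sub_le j i).trans_lt j.2)) i
  rwa [Nat.add_sub_cancel' hij.le] at this

theorem exists_mk_pow_eq (hφ : DiffSimple φ) : ∃ e : S, ∀ i j,
    Ideal.Quotient.mk (P j) ((φ ^ i) e) = if i ≡ j [MOD t] then 1 else 0 := by
  obtain ⟨e, he⟩ := Ideal.exists_forall_sub_mem_ideal (h.pairwise_isCoprime hφ)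
    fun i => if (i : ℕ) = 0 then 1 else 0
  have hbase : ∀ k, e - (if t ∣ k then 1 else 0) ∈ P k := fun k => by
    rw [← h.periodic.map_mod_nat]
    simpa only [Nat.dvd_iff_mod_eq_zero] using he ⟨k % t, Nat.mod_lt _ h.pos⟩
  refine ⟨e, fun i j => ?_⟩
  obtain ⟨k, hk⟩ : ∃ k, k + i = j + i * t :=
    ⟨j + i * t - i, Nat.sub_add_cancel (by nlinarith [h.pos])⟩
  have hkj : k + i ≡ j [MOD t] := by simp [hk]
  have hiff : t ∣ k ↔ i ≡ j [MOD t] := by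
    rw [← Nat.modEq_zero_iff_dvd]
    refine ⟨fun h0 => ?_, fun hij => ?_⟩
    · simpa using (h0.add_right i).symm.trans hkj
    · exact Nat.ModEq.add_right_cancel' i (by simpa using hkj.trans hij.symm)
  have hmk : Ideal.Quotient.mk (P j) ((φ ^ i) e) =
      Ideal.Quotient.mk (P j) ((φ ^ i) (if t ∣ k then 1 else 0)) := by
    rw [← (h.eq_iff _ _).2 hkj, Ideal.Quotient.eq, ← map_sub, h.pow_mem_iff]
    exact hbase k
  simpa only [hiff, apply_ite, map_one, map_zero] using hmk

end IsPrimeCycle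

end PrimeCycles

section CyclicIdempotents

/-- An idempotent `e` whose distinct `φ`-conjugates `e, φ e, …, φ ^ (t - 1) e` are orthogonal with
sum `1`. -/
structure IsCyclicIdempotent {S : Type*} [CommRing S] (φ : S →+* S) (e : S) (t : ℕ) : Prop where
  pos : 0 < t
  ne_zero : e ≠ 0
  period : (φ ^ t) e = e
  orthogonal : ∀ i, 0 < i → i < t → e * (φ ^ i) e = 0
  sum_eq_one : ∑ i ∈ Finset.range t, (φ ^ i) e = 1

/-- A cyclic idempotent `e` for which `e S` is a domain. -/
structure IsCyclicDomainIdempotent {S : Type*} [CommRing S] (φ : S →+* S) (e : S) (t : ℕ) :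
    Prop extends IsCyclicIdempotent φ e t where
  eq_zero_or_eq_zero : ∀ x y, e * (x * y) = 0 → e * x = 0 ∨ e * y = 0

variable {S : Type*} [CommRing S] {φ : S →+* S}

theorem pow_apply_of_semiconj {T : Type*} [CommRing T] {Φ : T →+* T} {j : S →+* T}
    (h : ∀ a, Φ (j a) = j (φ a)) (i : ℕ) (a : S) : (Φ ^ i) (j a) = j ((φ ^ i) a) := by
  rw [RingHom.coe_pow, RingHom.coe_pow]
  exact ((Function.Semiconj.iterate_right (f := j) (fun a => (h a).symm) i) a).symm

theorem IsPrimeCycle.isCyclicIdempotent {t : ℕ} {P : ℕ → Ideal S} (h : IsPrimeCycle φ t P)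
    (hφ : DiffSimple φ) {e : S} (he : ∀ i j,
      Ideal.Quotient.mk (P j) ((φ ^ i) e) = if i ≡ j [MOD t] then 1 else 0) :
    IsCyclicIdempotent φ e t where
  pos := h.pos
  ne_zero := by
    rintro rfl
    have := h.isPrime 0
    have h0 := he 0 0
    rw [map_zero, map_zero, if_pos (Nat.ModEq.refl 0)] at h0
    exact zero_ne_one h0
  period := h.eq_of_forall_mk_eq hφ fun j =>
    (he t j).trans <| (if_congr (by simp [Nat.ModEq]) rfl rfl).trans (he 0 j).symm
  orthogonal i hi hit := h.eq_of_forall_mk_eq hφ fun j => by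
    have h0 : Ideal.Quotient.mk (P j) e = if 0 ≡ j [MOD t] then 1 else 0 := he 0 j
    rw [map_mul, he i j, h0, map_zero, mul_ite, mul_one, mul_zero]
    refine ite_eq_right_iff.2 fun hij => if_neg fun h0j => ?_
    exact Nat.not_dvd_of_pos_of_lt hi hit (Nat.modEq_zero_iff_dvd.1 (hij.trans h0j.symm))
  sum_eq_one := h.eq_of_forall_mk_eq hφ fun j => by
    rw [map_sum, map_one, Finset.sum_congr rfl fun i _ => he i j,
      Finset.sum_eq_single_of_mem (j % t) (Finset.mem_range.2 (Nat.mod_lt _ h.pos)),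
      if_pos (Nat.mod_modEq j t)]
    intro i hi hij
    refine if_neg fun hmod : i % t = j % t => hij ?_
    rw [← hmod, Nat.mod_eq_of_lt (Finset.mem_range.1 hi)]

theorem DiffSimple.exists_isCyclicDomainIdempotent [IsNoetherianRing S] (hφ : DiffSimple φ) :
    ∃ e t, IsCyclicDomainIdempotent φ e t := by
  have := hφ.nontrivial
  obtain ⟨t, P, h⟩ := exists_isPrimeCycle (hφ.injective_of_semiconj (ψ := φ) φ fun _ => rfl)
  obtain ⟨e, he⟩ := h.exists_mk_pow_eq hφ
  refine ⟨e, t, h.isCyclicIdempotent hφ he, fun x y hxy => ?_⟩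
  have hmk : ∀ j, Ideal.Quotient.mk (P j) e = if 0 ≡ j [MOD t] then 1 else 0 := he 0
  have hzero : ∀ z ∈ P 0, e * z = 0 := fun z hz => h.eq_of_forall_mk_eq hφ fun j => by
    rw [map_mul, hmk, map_zero]
    split_ifs with hj
    · rw [one_mul, Ideal.Quotient.eq_zero_iff_mem, ← (h.eq_iff 0 j).2 hj]
      exact hz
    · rw [zero_mul]
  have hmem : x * y ∈ P 0 := by
    have := congrArg (Ideal.Quotient.mk (P 0)) hxy
    rwa [map_mul, hmk, if_pos (Nat.ModEq.refl 0), one_mul, map_zero,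
      Ideal.Quotient.eq_zero_iff_mem] at this
  exact ((h.isPrime 0).mem_or_mem hmem).imp (hzero x) (hzero y)

namespace IsCyclicIdempotent

variable {e : S} {t : ℕ}

theorem mul_self (h : IsCyclicIdempotent φ e t) : e * e = e := by
  calc e * e = ∑ i ∈ Finset.range t, e * (φ ^ i) e := by
        rw [Finset.sum_eq_single_of_mem 0 (Finset.mem_range.2 h.pos) fun i hi h0 =>
          h.orthogonal i (Nat.pos_of_ne_zero h0) (Finset.mem_range.1 hi)]
        rfl
    _ = e := by rw [← Finset.mul_sum, h.sum_eq_one, mul_one]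

theorem sum_mul (h : IsCyclicIdempotent φ e t) (f : S) :
    ∑ i ∈ Finset.range t, (φ ^ i) e * f = f := by
  rw [← Finset.sum_mul, h.sum_eq_one, one_mul]

/-- The constant is the trace of `f * e`. -/
theorem exists_fixed_mul_eq (h : IsCyclicIdempotent φ e t) {f : S} (hf : (φ ^ t) f = f) :
    ∃ c, φ c = c ∧ f * e = c * e := by
  refine ⟨∑ i ∈ Finset.range t, (φ ^ i) (f * e), ?_, ?_⟩
  · have hper : (φ ^ t) (f * e) = f * e := by rw [map_mul, hf, h.period]
    have hshift := Finset.sum_range_succ (fun i => (φ ^ i) (f * e)) t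
    rw [Finset.sum_range_succ', hper, pow_zero, RingHom.one_def, RingHom.id_apply] at hshift
    rw [map_sum, ← add_right_cancel hshift]
    exact Finset.sum_congr rfl fun i _ => by rw [pow_succ']; rfl
  · rw [Finset.sum_mul, Finset.sum_eq_single_of_mem 0 (Finset.mem_range.2 h.pos)]
    · rw [pow_zero, RingHom.one_def, RingHom.id_apply, mul_assoc, h.mul_self]
    · intro i hi h0
      rw [map_mul, mul_assoc, mul_comm _ e,
        h.orthogonal i (Nat.pos_of_ne_zero h0) (Finset.mem_range.1 hi), mul_zero]

theorem map_of_semiconj {T : Type*} [CommRing T] {Φ : T →+* T} {j : S →+* T}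
    (hj : Function.Injective j) (hφ : ∀ a, Φ (j a) = j (φ a)) (h : IsCyclicIdempotent φ e t) :
    IsCyclicIdempotent Φ (j e) t := by
  have hpow := pow_apply_of_semiconj hφ
  refine ⟨h.pos, (map_ne_zero_iff j hj).2 h.ne_zero, ?_, fun i h0 hi => ?_, ?_⟩
  · rw [hpow, h.period]
  · rw [hpow, ← map_mul, h.orthogonal i h0 hi, map_zero]
  · simp only [hpow]
    rw [← map_sum, h.sum_eq_one, map_one]

end IsCyclicIdempotent

namespace IsCyclicDomainIdempotent

variable {e : S} {t : ℕ}

theorem map (h : IsCyclicDomainIdempotent φ e t) (hφ : Function.Injective φ) :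
    IsCyclicDomainIdempotent φ (φ e) t := by
  refine ⟨h.toIsCyclicIdempotent.map_of_semiconj hφ fun _ => rfl, fun x y hxy => ?_⟩
  have hinj : Function.Injective (φ ^ (t - 1)) := by
    rw [RingHom.coe_pow]
    exact hφ.iterate _
  have he : (φ ^ (t - 1)) (φ e) = e := by
    rw [← RingHom.comp_apply, ← RingHom.mul_def, pow_sub_one_mul h.pos.ne', h.period]
  have hxy' := congrArg (φ ^ (t - 1)) hxy
  rw [map_mul, map_mul, map_zero, he] at hxy'
  refine (h.eq_zero_or_eq_zero _ _ hxy').imp (fun h0 => hinj ?_) fun h0 => hinj ?_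
  all_goals rw [map_mul, he, h0, map_zero]

theorem map_pow (h : IsCyclicDomainIdempotent φ e t) (hφ : Function.Injective φ) (i : ℕ) :
    IsCyclicDomainIdempotent φ ((φ ^ i) e) t := by
  induction i with
  | zero => exact h
  | succ i ih =>
    rw [pow_succ']
    exact ih.map hφ

theorem mul_eq_zero_or_eq (h : IsCyclicDomainIdempotent φ e t) {f : S}
    (hf : IsIdempotentElem f) : e * f = 0 ∨ e * f = e := by
  refine (h.eq_zero_or_eq_zero f (1 - f) ?_).imp_right fun h1 => ?_
  · rw [hf.mul_one_sub_self, mul_zero]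
  · rw [mul_sub, mul_one, sub_eq_zero] at h1
    exact h1.symm

theorem pow_period_of_isIdempotentElem (h : IsCyclicDomainIdempotent φ e t)
    (hφ : Function.Injective φ) {f : S} (hf : IsIdempotentElem f) : (φ ^ t) f = f := by
  refine (h.sum_mul _).symm.trans ((Finset.sum_congr rfl fun i _ => ?_).trans (h.sum_mul f))
  have hi := h.map_pow hφ i
  rw [← hi.period, ← map_mul, hi.period]
  rcases hi.mul_eq_zero_or_eq hf with h1 | h1
  · rw [h1, map_zero]
  · rw [h1, hi.period]

end IsCyclicDomainIdempotent

end CyclicIdempotents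

section SimpleTower

variable {K V S : Type*} [Field K] [CommRing S] [Algebra K S] {x : ℕ × V → S}

theorem finiteType_stageAlg [Finite V] (x : ℕ × V → S) (d : ℕ) :
    Algebra.FiniteType K (stageAlg K x d) := by
  rw [← Subalgebra.fg_iff_finiteType]
  have hfin : {p : ℕ × V | p.1 < d}.Finite :=
    ((Set.finite_Iio d).prod Set.finite_univ).subset fun _ hp => ⟨hp, trivial⟩
  exact Subalgebra.fg_def.2 ⟨_, hfin.image x, rfl⟩

theorem isNoetherianRing_stageAlg [Finite V] (x : ℕ × V → S) (d : ℕ) :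
    IsNoetherianRing (stageAlg K x d) :=
  have := finiteType_stageAlg (K := K) x d
  Algebra.FiniteType.isNoetherianRing K _

variable [Fintype V] {φ σ : K →+* K} {B : Matrix V V K} {Φ τ : S →+* S}

namespace IsTower

theorem sigma_mem_stageAlg (h : IsTower φ σ B Φ τ x) (d : ℕ) (a : S)
    (ha : a ∈ stageAlg K x d) : τ a ∈ stageAlg K x (d + 1) :=
  map_mem_stageAlg h.sigma_algebraMap (fun p hp => by
    rw [← p.eta, h.sigma_gen]
    exact gen_mem_stageAlg x (Nat.succ_lt_succ hp)) ha

/-- The endomorphism `τ` as a map from a stage to the next one. -/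
def stageSigma (h : IsTower φ σ B Φ τ x) (d : ℕ) : stageAlg K x d →+* stageAlg K x (d + 1) :=
  τ.restrict (stageAlg K x d) (stageAlg K x (d + 1)) (h.sigma_mem_stageAlg d)

theorem phi_pow_mem_stageAlg (h : IsTower φ σ B Φ τ x) {d : ℕ} {a : S}
    (ha : a ∈ stageAlg K x d) (i : ℕ) : (Φ ^ i) a ∈ stageAlg K x d := by
  induction i with
  | zero => exact ha
  | succ i ih =>
    rw [pow_succ']
    exact h.phi_mem_stageAlg d _ ih

end IsTower

namespace IsSimpleTower

variable (h : IsSimpleTower φ σ B Φ τ x)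
include h

theorem diffSimple : DiffSimple Φ := by
  have := (h.simple_stage 0).nontrivial
  have : Nontrivial S := (Subtype.val_injective (p := (· ∈ stageAlg K x 0))).nontrivial
  refine ⟨bot_ne_top, fun I hI => or_iff_not_imp_left.2 fun hne => ?_⟩
  obtain ⟨a, ha, ha0⟩ := Submodule.exists_mem_ne_zero_of_ne_bot hne
  obtain ⟨d, hd⟩ := h.exists_mem_stageAlg a
  have hcomap := (h.simple_stage d).2 (I.comap (stageAlg K x d).val) fun y hy => hI _ hy
  refine Ideal.comap_eq_top_iff.1 (hcomap.resolve_left fun hbot => ?_)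
  have : (⟨a, hd⟩ : stageAlg K x d) ∈ I.comap (stageAlg K x d).val := ha
  rw [hbot, Ideal.mem_bot] at this
  exact ha0 (congrArg Subtype.val this)

theorem exists_eq_algebraMap [IsAlgClosed (fixedField φ)] {c : S} (hc : Φ c = c) :
    ∃ a, φ a = a ∧ algebraMap K S a = c := by
  obtain ⟨d, hd⟩ := h.exists_mem_stageAlg c
  have := finiteType_stageAlg (K := K) x d
  obtain ⟨a, ha, hac⟩ := exists_eq_algebraMap_of_fixed (c := ⟨c, hd⟩) (h.simple_stage d)
    (fun a => Subtype.ext (h.phi_algebraMap a)) (Subtype.ext hc)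
  exact ⟨a, ha, congrArg Subtype.val hac⟩

theorem exists_isCyclicDomainIdempotent_stage (d : ℕ) :
    ∃ e t, IsCyclicDomainIdempotent (h.stagePhi d) e t :=
  have := isNoetherianRing_stageAlg (K := K) x d
  (h.simple_stage d).exists_isCyclicDomainIdempotent

/-- On each conjugate `(Φ ^ i) e` the element `f` agrees with a constant, hence with an element of
the base field. -/
theorem mem_stageAlg_of_pow_eq [IsAlgClosed (fixedField φ)] {d : ℕ} {e : S}
    (hed : e ∈ stageAlg K x d) {t : ℕ} (he : IsCyclicIdempotent Φ e t) {f : S}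
    (hf : (Φ ^ t) f = f) : f ∈ stageAlg K x d := by
  rw [← he.sum_mul f]
  refine sum_mem fun i hi => ?_
  have hadd : ∀ m m' a, (Φ ^ m) ((Φ ^ m') a) = (Φ ^ (m + m')) a := fun m m' a => by
    rw [pow_add]; rfl
  have hit : i ≤ t := (Finset.mem_range.1 hi).le
  obtain ⟨c, hc, hce⟩ := he.exists_fixed_mul_eq (f := (Φ ^ (t - i)) f) (by
    rw [hadd, add_comm, ← hadd, hf])
  obtain ⟨a, -, rfl⟩ := h.exists_eq_algebraMap hc
  have hmul : (Φ ^ i) e * f = (Φ ^ i) (algebraMap K S a) * (Φ ^ i) e := by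
    rw [← map_mul, ← hce, map_mul, hadd, Nat.add_sub_cancel' hit, hf, mul_comm]
  rw [hmul]
  exact mul_mem (h.phi_pow_mem_stageAlg (Subalgebra.algebraMap_mem _ _) i)
    (h.phi_pow_mem_stageAlg hed i)

theorem sigma_mem_stageAlg_of_isIdempotentElem [IsAlgClosed (fixedField φ)] {d : ℕ} {f : S}
    (hfd : f ∈ stageAlg K x d) (hf : IsIdempotentElem f) : τ f ∈ stageAlg K x d := by
  obtain ⟨e, t, he⟩ := h.exists_isCyclicDomainIdempotent_stage d
  have hval : ∀ a, Φ ((stageAlg K x d).val.toRingHom a) =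
    (stageAlg K x d).val.toRingHom (h.stagePhi d a) := fun _ => rfl
  refine h.mem_stageAlg_of_pow_eq e.2
    (he.toIsCyclicIdempotent.map_of_semiconj Subtype.val_injective hval) ?_
  have := (h.simple_stage d).nontrivial
  have hperiod : (Φ ^ t) f = f := by
    have hfix := he.pow_period_of_isIdempotentElem
      ((h.simple_stage d).injective_of_semiconj (ψ := h.stagePhi d) (h.stagePhi d) fun _ => rfl)
      (f := ⟨f, hfd⟩) (Subtype.ext hf)
    exact (pow_apply_of_semiconj hval t ⟨f, hfd⟩).trans (congrArg Subtype.val hfix)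
  rw [pow_apply_of_semiconj h.comm, hperiod]

end IsSimpleTower

end SimpleTower

section Reflexivity

open MvPolynomial

variable {V S : Type*} [CommRing S] {Φ τ : S →+* S}

theorem exists_forall_mem_of_map_mem_of_surjective {R : Type*} [CommRing R]
    [IsNoetherianRing R] {s : R →+* R} (hs : Function.Surjective s)
    {I : ℕ → Ideal R} (hI : ∀ d, ∀ a ∈ I d, s a ∈ I (d + 1)) :
    ∃ D, ∀ d ≥ D, ∀ a, s a ∈ I (d + 1) → a ∈ I d := by
  have hpow : ∀ d a, s ((s ^ d) a) = (s ^ (d + 1)) a := fun d a => by rw [pow_succ']; rfl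
  let J : ℕ →o Ideal R :=
    { toFun := fun d => (I d).comap (s ^ d)
      monotone' := monotone_nat_of_le_succ fun d a ha => by
        rw [Ideal.mem_comap, ← hpow]
        exact hI d _ ha }
  obtain ⟨D, hD⟩ := monotone_stabilizes_iff_noetherian.2 ‹IsNoetherianRing R› J
  refine ⟨D, fun d hd a ha => ?_⟩
  obtain ⟨b, rfl⟩ : ∃ b, (s ^ d) b = a := by
    rw [RingHom.coe_pow]
    exact hs.iterate d a
  have hJ : J (d + 1) = J d := (hD _ (Nat.le_succ_of_le hd)).symm.trans (hD d hd)
  rw [hpow] at ha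
  exact hJ.le ha

theorem DiffSimple.isField_eqLocus (hΦ : DiffSimple Φ) : IsField (Φ.eqLocus (RingHom.id S)) := by
  have := hΦ.nontrivial
  refine ⟨⟨0, 1, zero_ne_one⟩, mul_comm, fun {c} h0 => ?_⟩
  have hc : IsUnit (c : S) := hΦ.isUnit_of_fixed c.2 fun h => h0 (Subtype.ext h)
  obtain ⟨y, hy⟩ := hc.exists_right_inv
  have hΦy : Φ y = y := hc.mul_left_cancel <| by
    have h1 := congrArg Φ hy
    rw [map_mul, map_one, show Φ c = c from c.2] at h1
    rw [h1, hy]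
  exact ⟨⟨y, hΦy⟩, Subtype.ext hy⟩

theorem exists_map_eqLocus_eq {f : MvPolynomial V S} (hf : map Φ f = f) :
    ∃ g, map (Φ.eqLocus (RingHom.id S)).subtype g = f := by
  refine (mem_range_map_iff_coeffs_subset (f := (Φ.eqLocus (RingHom.id S)).subtype)).2
    fun c hc => ?_
  obtain ⟨m, -, rfl⟩ := mem_coeffs_iff.1 hc
  refine ⟨⟨coeff m f, ?_⟩, rfl⟩
  change Φ _ = _
  rw [← coeff_map, hf]
  rfl

/-- Stable submodules are spanned by polynomials with constant coefficients, and the polynomial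
ring over the field of constants is Noetherian. -/
theorem DiffSimple.exists_forall_mem_of_map_mem [Finite V] (hΦ : DiffSimple Φ)
    (hcomm : ∀ a, Φ (τ a) = τ (Φ a)) (honto : ∀ c, Φ c = c → ∃ b, Φ b = b ∧ τ b = c)
    {𝔟 : ℕ → Ideal (MvPolynomial V S)} (hΦ𝔟 : ∀ d, ∀ f ∈ 𝔟 d, map Φ f ∈ 𝔟 d)
    (hτ𝔟 : ∀ d, ∀ f ∈ 𝔟 d, map τ f ∈ 𝔟 (d + 1)) :
    ∃ D, ∀ d ≥ D, ∀ f, map τ f ∈ 𝔟 (d + 1) → f ∈ 𝔟 d := by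
  let C := Φ.eqLocus (RingHom.id S)
  have : IsNoetherianRing C := let := hΦ.isField_eqLocus.toField; inferInstance
  let s : C →+* C := τ.restrict C C fun c hc => (hcomm c).trans (congrArg τ hc)
  have hs : Function.Surjective s := fun c => by
    obtain ⟨b, hb, hbc⟩ := honto c c.2
    exact ⟨⟨b, hb⟩, Subtype.ext hbc⟩
  have hsub : ∀ g : MvPolynomial V C, map C.subtype (map s g) = map τ (map C.subtype g) :=
    fun g => by
      rw [map_map, map_map]
      rfl
  obtain ⟨D, hD⟩ := exists_forall_mem_of_map_mem_of_surjective (map_surjective s hs)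
    (I := fun d => (𝔟 d).comap (map C.subtype)) fun d g hg => by
      rw [Ideal.mem_comap, hsub]
      exact hτ𝔟 d _ hg
  refine ⟨D, fun d hd f hf => ?_⟩
  let N : Submodule S (MvPolynomial V S) := ((𝔟 (d + 1)).comap (map τ)).restrictScalars S
  have hN : ∀ f ∈ N, map Φ f ∈ N := fun f hf => by
    have hcomp : τ.comp Φ = Φ.comp τ := RingHom.ext fun a => (hcomm a).symm
    rw [Submodule.restrictScalars_mem, Ideal.mem_comap, map_map, hcomp, ← map_map]
    exact hΦ𝔟 _ _ hf
  have hle : Submodule.span S {g ∈ N | map Φ g = g} ≤ (𝔟 d).restrictScalars S := by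
    refine Submodule.span_le.2 ?_
    rintro _ ⟨hg, hfix⟩
    obtain ⟨g, rfl⟩ := exists_map_eqLocus_eq hfix
    refine hD d hd g ?_
    rw [Ideal.mem_comap, hsub]
    exact hg
  exact hle (hΦ.mem_span_fixed hN hf)

end Reflexivity

section Descent

open MvPolynomial

variable {V A A' S S' : Type*} [Fintype V] [CommRing A] [CommRing A'] [CommRing S] [CommRing S']
  {j : A →+* S} {j' : A' →+* S'} {ψ : S →+* S'} {α : A →+* A'} {x : V → S} {x' : V → S'}
  {R : Matrix V V S} {R' : Matrix V V S'} {N : Matrix V V A'}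

/-- The ideal of relations of `x`, after the linear substitution `R`. -/
noncomputable def substRelations (j : A →+* S) (x : V → S) (R : Matrix V V S) :
    Ideal (MvPolynomial V S) :=
  (RingHom.ker (eval₂Hom j x)).map (linearTwist j R)

theorem map_linearTwist (hα : ∀ a, ψ (j a) = j' (α a)) (hR : R.map ψ = N.map j' * R')
    (f : MvPolynomial V A) :
    map ψ (linearTwist j R f) = linearTwist j' R' (linearTwist α N f) := by
  classical
  have hcomp : ψ.comp j = j'.comp α := RingHom.ext hα
  rw [← linearTwist_one, ← RingHom.comp_apply, ← RingHom.comp_apply, linearTwist_comp,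
    linearTwist_comp, hcomp, hR, mul_one]

theorem map_mem_substRelations (hα : ∀ a, ψ (j a) = j' (α a))
    (hx : ∀ v, ψ (x v) = ∑ w, j' (N v w) * x' w) (hR : R.map ψ = N.map j' * R')
    {f : MvPolynomial V S} (hf : f ∈ substRelations j x R) : map ψ f ∈ substRelations j' x' R' := by
  suffices H : substRelations j x R ≤ (substRelations j' x' R').comap (map ψ) from H hf
  refine Ideal.map_le_iff_le_comap.2 fun p hp => ?_
  rw [Ideal.mem_comap, Ideal.mem_comap, map_linearTwist hα hR]
  refine Ideal.mem_map_of_mem _ ?_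
  rw [RingHom.mem_ker, eval₂Hom_linearTwist hα hx, RingHom.mem_ker.1 hp, map_zero]

theorem map_linearTwist_sub_C_mem_substRelations (hα : ∀ a, ψ (j a) = j' (α a))
    (hx : ∀ v, ψ (x v) = ∑ w, j' (N v w) * x' w) (hR : R.map ψ = N.map j' * R')
    {p : MvPolynomial V A} {b : A'} (hb : j' b = ψ (eval₂Hom j x p)) :
    map ψ (linearTwist j R p - C (eval₂Hom j x p)) ∈ substRelations j' x' R' := by
  rw [map_sub, map_C, ← hb, map_linearTwist hα hR, ← linearTwist_C j' R', ← map_sub]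
  refine Ideal.mem_map_of_mem _ ?_
  rw [RingHom.mem_ker, map_sub, eval₂Hom_linearTwist hα hx, eval₂Hom_C, hb, sub_self]

theorem linearTwist_mem_map_of_mem_substRelations [DecidableEq V] {R₁ : Matrix V V S}
    (hR : R * R₁ = 1) {f : MvPolynomial V S} (hf : f ∈ substRelations j x R) :
    linearTwist (RingHom.id S) R₁ f ∈ (RingHom.ker (eval₂Hom j x)).map (map j) := by
  have hcomp : (linearTwist (RingHom.id S) R₁).comp (linearTwist j R) = map j := by
    rw [linearTwist_comp, RingHom.id_comp, ← linearTwist_one, ← hR]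
    rfl
  rw [← hcomp, ← Ideal.map_map]
  exact Ideal.mem_map_of_mem _ hf

/-- After undoing the substitution, `1 ⊗ p(x) = p(x) ⊗ 1` in `S ⊗_A S`. As `A` is pure in `A[x]`,
this forces `p(x) ∈ A`. -/
theorem DiffSimple.exists_eq_eval₂Hom [Nontrivial S] [DecidableEq V] {φ : A →+* A}
    (hφ : DiffSimple φ) {Φ : S →+* S} (hΦ : ∀ a, Φ (j a) = j (φ a)) {M : Matrix V V A}
    (hM : IsUnit M.det) (hΦx : ∀ v, Φ (x v) = ∑ w, j (M v w) * x w) (hR : IsUnit R.det)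
    {p : MvPolynomial V A}
    (hp : linearTwist j R p - C (eval₂Hom j x p) ∈ substRelations j x R) :
    ∃ a, j a = eval₂Hom j x p := by
  set e := eval₂Hom j x p
  have hmem : map j p - e • map j 1 ∈ (RingHom.ker (eval₂Hom j x)).map (map j) := by
    have h := linearTwist_mem_map_of_mem_substRelations (R.mul_nonsing_inv hR) hp
    rwa [map_sub, ← RingHom.comp_apply, linearTwist_comp, RingHom.id_comp, RingHom.coe_id,
      Matrix.map_id, R.mul_nonsing_inv hR, linearTwist_one, linearTwist_C, RingHom.id_apply,
      ← mul_one (C e), ← smul_eq_C_mul, ← map_one (map j)] at h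
  obtain ⟨G, G', hG', hG1, hG⟩ := hφ.exists_dual_eq_zero_of_mem_map hM
    (isDiffIdeal_ker_eval₂Hom hΦ hΦx) (RingHom.ker_ne_top _) hmem
  rw [map_sub, map_smul, hG', hG', hG1, map_one, smul_eq_mul, mul_one, sub_eq_zero] at hG
  exact ⟨G p, hG⟩

end Descent

section StageIdempotents

open MvPolynomial

variable {K V S : Type*} [Field K] [CommRing S] [Algebra K S] {x : ℕ × V → S}

theorem exists_eval₂Hom_eq_of_mem_stageAlg {d : ℕ} {a : S} (ha : a ∈ stageAlg K x (d + 1)) :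
    ∃ p, eval₂Hom (algebraMap (stageAlg K x d) S) (fun v => x (d, v)) p = a := by
  have hle : stageAlg K x (d + 1) ≤
      (aeval (R := stageAlg K x d) fun v => x (d, v)).range.restrictScalars K := by
    refine stageAlg_le_iff.2 fun p hp => ?_
    rcases Nat.lt_succ_iff_lt_or_eq.1 hp with h | rfl
    · exact ⟨C ⟨x p, gen_mem_stageAlg x h⟩, aeval_C ..⟩
    · exact ⟨X p.2, aeval_X ..⟩
  exact hle ha

variable [Fintype V] {φ σ : K →+* K} {B : Matrix V V K} {Φ τ : S →+* S} {Q : Matrix V V S}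

/-- The relations over stage `d` between the generators of level `d`, written in the coordinates
given by the fundamental matrix `τ ^ d Q`. -/
noncomputable def stageRelations (K : Type*) {V S : Type*} [Field K] [CommRing S] [Algebra K S]
    [Fintype V] (x : ℕ × V → S) (τ : S →+* S) (Q : Matrix V V S) (d : ℕ) :
    Ideal (MvPolynomial V S) :=
  substRelations (algebraMap (stageAlg K x d) S) (fun v => x (d, v)) (Q.map (τ ^ d : S →+* S))

/-- The matrix of `φ` on the generators of level `d`, with entries in stage `d`. -/
def stageMatrix (K : Type*) {V S : Type*} [Field K] [CommRing S] [Algebra K S] (x : ℕ × V → S)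
    (σ : K →+* K) (B : Matrix V V K) (d : ℕ) : Matrix V V (stageAlg K x d) :=
  (B.map (σ ^ d : K →+* K)).map (algebraMap K (stageAlg K x d))

theorem isUnit_det_stageMatrix [DecidableEq V] (hB : IsUnit B.det) (d : ℕ) :
    IsUnit (stageMatrix K x σ B d).det := by
  rw [stageMatrix, ← RingHom.mapMatrix_apply, ← RingHom.mapMatrix_apply, ← RingHom.map_det,
    ← RingHom.map_det]
  exact (hB.map _).map _

theorem map_sigma_pow_succ [DecidableEq V] (d : ℕ) : (Q.map (τ ^ d : S →+* S)).map τ =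
    (1 : Matrix V V (stageAlg K x (d + 1))).map (algebraMap _ S) *
      Q.map (τ ^ (d + 1) : S →+* S) := by
  rw [Matrix.map_one _ (map_zero _) (map_one _), one_mul, pow_succ']
  rfl

namespace IsTower

variable (h : IsTower φ σ B Φ τ x)
include h

theorem phi_gen_eq_sum (d : ℕ) (v : V) : Φ (x (d, v)) =
    ∑ w, algebraMap (stageAlg K x d) S (stageMatrix K x σ B d v w) * x (d, w) :=
  h.phi_gen (d, v)

theorem map_phi_map_sigma_pow (hQ : Q.map Φ = B.map (algebraMap K S) * Q) (d : ℕ) :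
    (Q.map (τ ^ d : S →+* S)).map Φ = (stageMatrix K x σ B d).map (algebraMap _ S) *
      Q.map (τ ^ d : S →+* S) := by
  have hΦ : (Q.map (τ ^ d : S →+* S)).map Φ = (Q.map Φ).map (τ ^ d : S →+* S) :=
    Matrix.ext fun v u => (pow_apply_of_semiconj (fun a => (h.comm a).symm) d (Q v u)).symm
  have hσ : (B.map (algebraMap K S)).map (τ ^ d : S →+* S) =
      (stageMatrix K x σ B d).map (algebraMap _ S) :=
    Matrix.ext fun v u => pow_apply_of_semiconj h.sigma_algebraMap d (B v u)
  rw [hΦ, hQ, Matrix.map_mul, hσ]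

theorem map_phi_mem_stageRelations (hQ : Q.map Φ = B.map (algebraMap K S) * Q) (d : ℕ)
    (f : MvPolynomial V S) (hf : f ∈ stageRelations K x τ Q d) :
    map Φ f ∈ stageRelations K x τ Q d := by
  have hα : ∀ a, Φ (algebraMap (stageAlg K x d) S a) = algebraMap _ S (h.stagePhi d a) :=
    fun _ => rfl
  exact map_mem_substRelations hα (h.phi_gen_eq_sum d) (h.map_phi_map_sigma_pow hQ d) hf

theorem sigma_gen_eq_sum [DecidableEq V] (d : ℕ) (v : V) : τ (x (d, v)) =
    ∑ w, algebraMap (stageAlg K x (d + 1)) S ((1 : Matrix V V _) v w) * x (d + 1, w) := by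
  simp [h.sigma_gen, Matrix.one_apply, apply_ite]

theorem map_sigma_mem_stageRelations (d : ℕ) (f : MvPolynomial V S)
    (hf : f ∈ stageRelations K x τ Q d) : map τ f ∈ stageRelations K x τ Q (d + 1) := by
  classical
  have hα : ∀ a, τ (algebraMap (stageAlg K x d) S a) = algebraMap _ S (h.stageSigma d a) :=
    fun _ => rfl
  exact map_mem_substRelations hα (h.sigma_gen_eq_sum d) (map_sigma_pow_succ d) hf

end IsTower

namespace IsSimpleTower

variable (h : IsSimpleTower φ σ B Φ τ x)
include h

/-- A conjugate of a primitive idempotent of a higher stage is again in stage `D`, so that it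
coincides with `e` as soon as their product is nonzero. -/
theorem eq_zero_or_eq_zero_of_mem_stageAlg {D n : ℕ} (hDn : D ≤ n)
    (hD : ∀ e : S, IsIdempotentElem e → e ∈ stageAlg K x D) {e : stageAlg K x D} {t : ℕ}
    (he : IsCyclicDomainIdempotent (h.stagePhi D) e t) {a b : S} (ha : a ∈ stageAlg K x n)
    (hb : b ∈ stageAlg K x n) (hab : (e : S) * (a * b) = 0) :
    (e : S) * a = 0 ∨ (e : S) * b = 0 := by
  obtain ⟨e', t', he'⟩ := h.exists_isCyclicDomainIdempotent_stage n
  have := (h.simple_stage n).nontrivial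
  have hconj := he'.map_pow ((h.simple_stage n).injective_of_semiconj (ψ := h.stagePhi n)
    (h.stagePhi n) fun _ => rfl)
  let en : stageAlg K x n := ⟨e, stageAlg_mono x hDn e.2⟩
  have hen : IsIdempotentElem en :=
    Subtype.ext (congrArg Subtype.val he.mul_self : (e : S) * e = e)
  obtain ⟨i, hi⟩ : ∃ i, (h.stagePhi n ^ i) e' * en ≠ 0 := by
    by_contra! h0
    have hen0 : en = 0 := (he'.sum_mul en).symm.trans (Finset.sum_eq_zero fun i _ => h0 i)
    exact he.ne_zero (Subtype.ext (congrArg Subtype.val hen0 : (e : S) = 0))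
  set f := (h.stagePhi n ^ i) e'
  have hf : IsIdempotentElem (f : S) := congrArg Subtype.val (hconj i).mul_self
  have hfe : f * en = f := ((hconj i).mul_eq_zero_or_eq hen).resolve_left hi
  have hef : (e : S) * f = e := by
    have := (he.mul_eq_zero_or_eq (f := ⟨f, hD f hf⟩) (Subtype.ext hf)).resolve_left fun h0 =>
      hi (Subtype.ext ((mul_comm _ _).trans (congrArg Subtype.val h0)))
    exact congrArg Subtype.val this
  have hfe' : (f : S) = e :=
    (congrArg Subtype.val hfe).symm.trans ((mul_comm _ _).trans hef)
  rw [← hfe'] at hab ⊢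
  exact ((hconj i).eq_zero_or_eq_zero ⟨a, ha⟩ ⟨b, hb⟩ (Subtype.ext hab)).imp
    (congrArg Subtype.val) (congrArg Subtype.val)

variable [IsAlgClosed (fixedField φ)]

theorem exists_forall_mem_stageRelations (honto : ∀ a : K, φ a = a → ∃ b, φ b = b ∧ σ b = a)
    (hQ : Q.map Φ = B.map (algebraMap K S) * Q) :
    ∃ D, ∀ d ≥ D, ∀ f, map τ f ∈ stageRelations K x τ Q (d + 1) → f ∈ stageRelations K x τ Q d :=
  h.diffSimple.exists_forall_mem_of_map_mem h.comm (fun c hc => by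
      obtain ⟨a, ha, rfl⟩ := h.exists_eq_algebraMap hc
      obtain ⟨b, hb, rfl⟩ := honto a ha
      exact ⟨algebraMap K S b, by rw [h.phi_algebraMap, hb], h.sigma_algebraMap b⟩)
    (h.map_phi_mem_stageRelations hQ) h.map_sigma_mem_stageRelations

theorem mem_stageAlg_of_mem_succ [DecidableEq V] (hB : IsUnit B.det) (hQ : IsUnit Q.det) {d : ℕ}
    (hd : ∀ f, map τ f ∈ stageRelations K x τ Q (d + 1) → f ∈ stageRelations K x τ Q d) {e : S}
    (hed : e ∈ stageAlg K x (d + 1)) (he : IsIdempotentElem e) : e ∈ stageAlg K x d := by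
  have := h.diffSimple.nontrivial
  obtain ⟨p, rfl⟩ := exists_eval₂Hom_eq_of_mem_stageAlg hed
  have hR : IsUnit (Q.map (τ ^ d : S →+* S)).det := by
    rw [← RingHom.mapMatrix_apply, ← RingHom.map_det]
    exact hQ.map _
  have hΦ : ∀ a, Φ (algebraMap (stageAlg K x d) S a) = algebraMap _ S (h.stagePhi d a) :=
    fun _ => rfl
  have hτ : ∀ a, τ (algebraMap (stageAlg K x d) S a) = algebraMap _ S (h.stageSigma d a) :=
    fun _ => rfl
  obtain ⟨a, ha⟩ := (h.simple_stage d).exists_eq_eval₂Hom hΦ (isUnit_det_stageMatrix hB d)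
    (h.phi_gen_eq_sum d) hR <| hd _ <| map_linearTwist_sub_C_mem_substRelations hτ
      (h.sigma_gen_eq_sum d) (map_sigma_pow_succ d)
      (b := ⟨_, h.sigma_mem_stageAlg_of_isIdempotentElem hed he⟩) rfl
  exact ha ▸ a.2

theorem exists_forall_isIdempotentElem_mem_stageAlg [DecidableEq V] (hB : IsUnit B.det)
    (honto : ∀ a : K, φ a = a → ∃ b, φ b = b ∧ σ b = a) (hQdet : IsUnit Q.det)
    (hQ : Q.map Φ = B.map (algebraMap K S) * Q) :
    ∃ D, ∀ e : S, IsIdempotentElem e → e ∈ stageAlg K x D := by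
  obtain ⟨D, hD⟩ := h.exists_forall_mem_stageRelations honto hQ
  refine ⟨D, fun e he => ?_⟩
  obtain ⟨d, hd⟩ := h.exists_mem_stageAlg e
  replace hd : e ∈ stageAlg K x (D + d) := stageAlg_mono x (Nat.le_add_left d D) hd
  induction d with
  | zero => exact hd
  | succ d ih => exact ih (h.mem_stageAlg_of_mem_succ hB hQdet (hD _ (Nat.le_add_right D d)) hd he)

theorem exists_isCyclicDomainIdempotent [DecidableEq V] (hB : IsUnit B.det)
    (honto : ∀ a : K, φ a = a → ∃ b, φ b = b ∧ σ b = a) (hQdet : IsUnit Q.det)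
    (hQ : Q.map Φ = B.map (algebraMap K S) * Q) : ∃ e t, IsCyclicDomainIdempotent Φ e t := by
  obtain ⟨D, hD⟩ := h.exists_forall_isIdempotentElem_mem_stageAlg hB honto hQdet hQ
  obtain ⟨e, t, he⟩ := h.exists_isCyclicDomainIdempotent_stage D
  refine ⟨e, t, he.toIsCyclicIdempotent.map_of_semiconj (j := (stageAlg K x D).val.toRingHom)
    Subtype.val_injective fun _ => rfl, fun a b hab => ?_⟩
  obtain ⟨m, hm⟩ := h.exists_mem_stageAlg a
  obtain ⟨n, hn⟩ := h.exists_mem_stageAlg b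
  exact h.eq_zero_or_eq_zero_of_mem_stageAlg (le_max_left D (max m n)) hD he
    (stageAlg_mono x (le_max_of_le_right (le_max_left m n)) hm)
    (stageAlg_mono x (le_max_of_le_right (le_max_right m n)) hn) hab

end IsSimpleTower

end StageIdempotents

section TotalFractions

variable {S : Type*} [CommRing S] {Φ : S →+* S}

namespace IsCyclicDomainIdempotent

variable {e : S} {t : ℕ} (h : IsCyclicDomainIdempotent Φ e t) (hΦ : Function.Injective Φ)
include h hΦ

theorem mem_nonZeroDivisors_iff {a : S} : a ∈ nonZeroDivisors S ↔ ∀ i, (Φ ^ i) e * a ≠ 0 := by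
  rw [mem_nonZeroDivisors_iff_right]
  refine ⟨fun ha i h0 => (h.map_pow hΦ i).ne_zero (ha _ h0), fun ha y hy => ?_⟩
  rw [← h.sum_mul y]
  refine Finset.sum_eq_zero fun i _ => ?_
  refine ((h.map_pow hΦ i).eq_zero_or_eq_zero a y ?_).resolve_left (ha i)
  rw [mul_comm a, hy, mul_zero]

/-- If `ψ a` vanishes on the component `E`, then `a` vanishes on the component `F` to which `ψ⁻¹`
takes `E`: the remaining components of `ψ (F * a)` vanish by orthogonality. -/
theorem map_mem_nonZeroDivisors {ψ : S →+* S} (hψ : Function.Injective ψ)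
    (hcomm : ∀ a, Φ (ψ a) = ψ (Φ a)) {a : S} (ha : a ∈ nonZeroDivisors S) :
    ψ a ∈ nonZeroDivisors S := by
  rw [h.mem_nonZeroDivisors_iff hΦ] at ha ⊢
  intro j h0
  have hE := h.map_pow hΦ j
  set E := (Φ ^ j) e
  obtain ⟨i, hi⟩ : ∃ i, E * ψ ((Φ ^ i) e) ≠ 0 := by
    by_contra! h1
    refine hE.ne_zero ?_
    rw [← mul_one E, ← map_one ψ, ← h.sum_eq_one, map_sum, Finset.mul_sum]
    exact Finset.sum_eq_zero fun i _ => h1 i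
  have hF := h.map_pow hΦ i
  refine ha i (hψ ?_)
  set F := (Φ ^ i) e
  have hEF : E * ψ F = E := (hE.mul_eq_zero_or_eq
    ((map_mul ψ F F).symm.trans (congrArg ψ hF.mul_self))).resolve_left hi
  rw [map_zero, ← hE.sum_mul (ψ (F * a))]
  refine Finset.sum_eq_zero fun l hl => ?_
  rcases Nat.eq_zero_or_pos l with rfl | hl0
  · change E * ψ (F * a) = 0
    rw [map_mul, mul_left_comm, h0, mul_zero]
  · rw [← hEF, map_mul, pow_apply_of_semiconj hcomm, mul_assoc, ← map_mul, ← mul_assoc,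
      mul_comm _ F, hF.orthogonal l hl0 (Finset.mem_range.1 hl), zero_mul, map_zero, mul_zero]

theorem mul_add_one_sub_mem_nonZeroDivisors {a : S} (ha : e * a ≠ 0) :
    e * a + (1 - e) ∈ nonZeroDivisors S := by
  rw [h.mem_nonZeroDivisors_iff hΦ]
  intro i hi
  have he := h.mul_self
  have hE := h.map_pow hΦ i
  rcases hE.mul_eq_zero_or_eq he with h0 | h1
  · exact hE.ne_zero (by linear_combination hi - (a - 1) * h0)
  · have hEe : (Φ ^ i) e = e := by
      rcases h.mul_eq_zero_or_eq hE.mul_self with h2 | h2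
      · exact absurd (h1.symm.trans ((mul_comm _ _).trans h2)) hE.ne_zero
      · exact h1.symm.trans ((mul_comm _ _).trans h2)
    rw [hEe] at hi
    exact ha (by linear_combination hi - (a - 1) * he)

variable {L : Type*} [CommRing L] [Algebra S L] [IsFractionRing S L]

theorem algebraMap_mem_of_mul_ne_zero {I : Ideal L} {y : L} (hy : y ∈ I)
    (hne : algebraMap S L e * y ≠ 0) : algebraMap S L e ∈ I := by
  obtain ⟨⟨a, s⟩, hs : y * algebraMap S L s = algebraMap S L a⟩ :=
    IsLocalization.surj (nonZeroDivisors S) y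
  have ha : e * a ≠ 0 := fun h0 => hne <| by
    have h1 := congrArg (algebraMap S L) h0
    rw [map_mul, ← hs, ← mul_assoc, map_zero] at h1
    exact (IsLocalization.map_units L s).mul_left_eq_zero.1 h1
  have hz := IsLocalization.map_units L
    (⟨_, h.mul_add_one_sub_mem_nonZeroDivisors hΦ ha⟩ : nonZeroDivisors S)
  refine (I.mul_unit_mem_iff_mem hz).1 ?_
  rw [← map_mul, show e * (e * a + (1 - e)) = e * a by linear_combination (a - 1) * h.mul_self,
    map_mul, ← hs]
  exact I.mul_mem_left _ (I.mul_mem_right _ hy)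

theorem isNoetherianRing_of_isFractionRing : IsNoetherianRing L := by
  classical
  refine isNoetherianRing_iff_ideal_fg _ |>.2 fun I => ?_
  let E : ℕ → L := fun i => algebraMap S L ((Φ ^ i) e)
  refine ⟨((Finset.range t).image E).filter (· ∈ I), le_antisymm (Ideal.span_le.2 ?_) ?_⟩
  · exact fun y hy => (Finset.mem_filter.1 (Finset.mem_coe.1 hy)).2
  · intro y hy
    have hsum : ∑ i ∈ Finset.range t, E i * y = y := by
      rw [← Finset.sum_mul, ← map_sum, h.sum_eq_one, map_one, one_mul]
    rw [← hsum]
    refine sum_mem fun i hi => ?_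
    by_cases h0 : E i * y = 0
    · exact h0 ▸ zero_mem _
    · exact Ideal.mul_mem_right _ _ <| Ideal.subset_span <| Finset.mem_coe.2 <|
        Finset.mem_filter.2 ⟨Finset.mem_image_of_mem _ hi,
          (h.map_pow hΦ i).algebraMap_mem_of_mul_ne_zero hΦ hy h0⟩

end IsCyclicDomainIdempotent

theorem isUnit_of_mem_nonZeroDivisors_of_isFractionRing (S : Type*) {L : Type*} [CommRing S]
    [CommRing L] [Algebra S L] [IsFractionRing S L] {y : L} (hy : y ∈ nonZeroDivisors L) :
    IsUnit y := by
  obtain ⟨⟨a, s⟩, hs : y * algebraMap S L s = algebraMap S L a⟩ :=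
    IsLocalization.surj (nonZeroDivisors S) y
  have ha : a ∈ nonZeroDivisors S :=
    mem_nonZeroDivisors_of_injective (IsFractionRing.injective S L) <| hs ▸
      mul_mem hy (IsLocalization.map_units L s).mem_nonZeroDivisors
  have hau := IsLocalization.map_units L (⟨a, ha⟩ : nonZeroDivisors S)
  rw [← hs] at hau
  exact isUnit_of_mul_isUnit_left hau

variable {L : Type*} [CommRing L] [Algebra S L] {Φ' : L →+* L}

theorem DiffSimple.of_isLocalization [Nontrivial L] (M : Submonoid S) [IsLocalization M L]
    (hΦ : DiffSimple Φ) (h : ∀ a, Φ' (algebraMap S L a) = algebraMap S L (Φ a)) :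
    DiffSimple Φ' := by
  refine ⟨bot_ne_top, fun I hI => ?_⟩
  rw [← IsLocalization.map_under M L I]
  refine (hΦ.2 (I.under S) fun a ha => ?_).imp (fun h0 => ?_) fun h1 => ?_
  · rw [Ideal.mem_under, ← h]
    exact hI _ ha
  · rw [h0, Ideal.map_bot]
  · rw [h1, Ideal.map_top]

/-- The ideal of denominators of a constant is a `φ`-ideal. -/
theorem DiffSimple.exists_fixed_of_isFractionRing [IsFractionRing S L] (hΦ : DiffSimple Φ)
    (h : ∀ a, Φ' (algebraMap S L a) = algebraMap S L (Φ a)) {c : L} (hc : Φ' c = c) :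
    ∃ a, Φ a = a ∧ algebraMap S L a = c := by
  have := hΦ.nontrivial
  let I : Ideal S := (1 : Submodule S L).comap (LinearMap.toSpanSingleton S L c)
  have hI : ∀ s, s ∈ I ↔ ∃ a, algebraMap S L a = algebraMap S L s * c := fun s => by
    simp [I, Submodule.mem_one, Algebra.smul_def]
  have hdiff : IsDiffIdeal Φ I := fun s hs => by
    obtain ⟨a, ha⟩ := (hI s).1 hs
    exact (hI _).2 ⟨Φ a, by rw [← h, ha, map_mul, hc, h]⟩
  rcases hΦ.2 I hdiff with h0 | h1
  · obtain ⟨⟨a, s⟩, hs : c * algebraMap S L s = algebraMap S L a⟩ :=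
      IsLocalization.surj (nonZeroDivisors S) c
    have hsI : (s : S) ∈ I := (hI s).2 ⟨a, by rw [mul_comm, hs]⟩
    rw [h0, Ideal.mem_bot] at hsI
    exact absurd hsI (nonZeroDivisors.ne_zero s.2)
  · obtain ⟨a, ha⟩ := (hI 1).1 (h1 ▸ Submodule.mem_top)
    rw [map_one, one_mul] at ha
    exact ⟨a, IsFractionRing.injective S L (by rw [← h, ha, hc]), ha⟩

theorem IsCyclicDomainIdempotent.pseudoField {e : S} {t : ℕ} [IsFractionRing S L]
    (he : IsCyclicDomainIdempotent Φ e t) (hΦ : DiffSimple Φ)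
    (h : ∀ a, Φ' (algebraMap S L a) = algebraMap S L (Φ a)) : PseudoField L Φ' := by
  have := hΦ.nontrivial
  have : Nontrivial L := (IsFractionRing.injective S L).nontrivial
  exact ⟨hΦ.of_isLocalization (nonZeroDivisors S) h, he.isNoetherianRing_of_isFractionRing
    (hΦ.injective_of_semiconj (ψ := Φ) Φ fun _ => rfl),
    fun _ => isUnit_of_mem_nonZeroDivisors_of_isFractionRing S⟩

theorem IsCyclicDomainIdempotent.exists_extension {e : S} {t : ℕ} [IsFractionRing S L]
    (he : IsCyclicDomainIdempotent Φ e t) (hΦ : DiffSimple Φ) {ψ : S →+* S}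
    (hcomm : ∀ a, Φ (ψ a) = ψ (Φ a)) :
    ∃ ψ' : L →+* L, ∀ a, ψ' (algebraMap S L a) = algebraMap S L (ψ a) := by
  have := hΦ.nontrivial
  have hle : nonZeroDivisors S ≤ (nonZeroDivisors S).comap ψ := fun _ =>
    he.map_mem_nonZeroDivisors (hΦ.injective_of_semiconj (ψ := Φ) Φ fun _ => rfl)
      (hΦ.injective_of_semiconj (ψ := Φ) ψ hcomm) hcomm
  exact ⟨IsLocalization.map L ψ hle, IsLocalization.map_eq hle⟩

end TotalFractions

section ExtendedSystem

open Matrix MvPolynomial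
open scoped Kronecker

variable {ι R R' : Type*} [DecidableEq ι] [CommRing R] [CommRing R']

/-- The matrix of the linear system formed by `φ(Y) = A Y`, for the entries of a square matrix `Y`,
and `φ(z) = c z`, for one further unknown `z` that will be the inverse of `det Y`. -/
def extendedMatrix (A : Matrix ι ι R) (c : R) : Matrix (ι × ι ⊕ Unit) (ι × ι ⊕ Unit) R :=
  fromBlocks (A ⊗ₖ (1 : Matrix ι ι R)) 0 0 (of fun _ _ => c)

theorem extendedMatrix_map (f : R →+* R') (A : Matrix ι ι R) (c : R) :
    (extendedMatrix A c).map f = extendedMatrix (A.map f) (f c) := by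
  ext (⟨a, b⟩ | _) (⟨a', b'⟩ | _) <;> simp [extendedMatrix, one_apply, apply_ite f]

section Fintype

variable [Fintype ι]

theorem extendedMatrix_mul (A A' : Matrix ι ι R) (c c' : R) :
    extendedMatrix A c * extendedMatrix A' c' = extendedMatrix (A * A') (c * c') := by
  rw [extendedMatrix, extendedMatrix, extendedMatrix, fromBlocks_multiply]
  simp only [Matrix.mul_zero, Matrix.zero_mul, add_zero, zero_add, ← mul_kronecker_mul,
    Matrix.one_mul]
  congr 1
  ext
  simp [mul_apply]

theorem isUnit_det_extendedMatrix {A : Matrix ι ι R} {c : R} (hA : IsUnit A.det) (hc : IsUnit c) :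
    IsUnit (extendedMatrix A c).det := by
  rw [extendedMatrix, det_fromBlocks_zero₂₁, det_kronecker, det_one, one_pow, mul_one,
    det_unique (n := Unit), of_apply]
  exact (hA.pow _).mul hc

variable (f : R →+* R') (A : Matrix ι ι R) (c : R) (y : ι × ι ⊕ Unit → R')

theorem sum_extendedMatrix_inl (p q : ι) :
    ∑ w, f (extendedMatrix A c (Sum.inl (p, q)) w) * y w =
      (A.map f * of fun p q => y (Sum.inl (p, q))) p q := by
  simp [extendedMatrix, Fintype.sum_prod_type, one_apply, mul_apply, apply_ite f]

theorem sum_extendedMatrix_inr :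
    ∑ w, f (extendedMatrix A c (Sum.inr ()) w) * y w = f c * y (Sum.inr ()) := by
  simp [extendedMatrix]

/-- The polynomial `det Y * z - 1`, whose zeros are the invertible matrices `Y` together with the
inverse `z` of their determinant. -/
noncomputable def detRelation (ι R : Type*) [DecidableEq ι] [Fintype ι] [CommRing R] :
    MvPolynomial (ι × ι ⊕ Unit) R :=
  (of fun p q => X (Sum.inl (p, q))).det * X (Sum.inr ()) - 1

theorem map_detRelation (f : MvPolynomial (ι × ι ⊕ Unit) R →+* R') :
    f (detRelation ι R) =
      (of fun p q => f (X (Sum.inl (p, q)))).det * f (X (Sum.inr ())) - 1 := by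
  rw [detRelation, map_sub, map_mul, map_one, RingHom.map_det]
  rfl

theorem linearTwist_detRelation (φ : R →+* R) {A : Matrix ι ι R} {c : R} (hc : A.det * c = 1) :
    linearTwist φ (extendedMatrix A c) (detRelation ι R) = detRelation ι R := by
  have hX : ∀ v, linearTwist φ (extendedMatrix A c) (X v) =
      ∑ w, C (extendedMatrix A c v w) * X w := fun v => by
    simp only [linearTwist_X, toMvPolynomial, C_mul_X_eq_monomial]
  have hdet : (A.map (C : R →+* MvPolynomial (ι × ι ⊕ Unit) R)).det * C c = 1 := by
    rw [← RingHom.mapMatrix_apply, ← RingHom.map_det, ← map_mul, hc, map_one]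
  rw [map_detRelation]
  simp only [hX, sum_extendedMatrix_inl, sum_extendedMatrix_inr]
  change (A.map C * of fun p q => X (Sum.inl (p, q))).det * (C c * X (Sum.inr ())) - 1 = _
  rw [det_mul, mul_mul_mul_comm, hdet, one_mul, detRelation]

theorem span_detRelation_ne_top [Nontrivial R] :
    Ideal.span {detRelation ι R} ≠ ⊤ := by
  let ev : MvPolynomial (ι × ι ⊕ Unit) R →+* R :=
    eval (Sum.elim (fun p => (1 : Matrix ι ι R) p.1 p.2) fun _ => 1)
  have hle : Ideal.span {detRelation ι R} ≤ RingHom.ker ev := by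
    rw [Ideal.span_singleton_le_iff_mem, RingHom.mem_ker, map_detRelation, sub_eq_zero]
    simp only [ev, eval_X, Sum.elim_inl, Sum.elim_inr, mul_one]
    exact det_one
  exact ne_top_of_le_ne_top (RingHom.ker_ne_top ev) hle

end Fintype

/-- The solution matrix in the first coordinates of the `i`-th step of a tower. -/
def solutionMatrix {S : Type*} (x : ℕ × (ι × ι ⊕ Unit) → S) (i : ℕ) : Matrix ι ι S :=
  of fun p q => x (i, Sum.inl (p, q))

end ExtendedSystem

section FundamentalMatrix

open Matrix MvPolynomial

theorem exists_isSimpleTower_extendedMatrix.{u, v} {K : Type u} {ι : Type v} [Field K] [Fintype ι]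
    [DecidableEq ι] {φ σ : K →+* K} (hcomm : φ.comp σ = σ.comp φ) {A : Matrix ι ι K}
    (hA : IsUnit A.det) :
    ∃ (S : Type max u v) (_ : CommRing S) (_ : Algebra K S) (Φ τ : S →+* S)
      (x : ℕ × (ι × ι ⊕ Unit) → S), IsSimpleTower φ σ (extendedMatrix A A.det⁻¹) Φ τ x ∧
        (solutionMatrix x 0).det * x (0, Sum.inr ()) = 1 := by
  have h𝔟 : IsDiffIdeal (linearTwist φ (extendedMatrix A A.det⁻¹))
      (Ideal.span {detRelation ι K}) := isDiffIdeal_span fun f hf => by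
    rw [Set.mem_singleton_iff.1 hf, linearTwist_detRelation φ (mul_inv_cancel₀ hA.ne_zero)]
    exact Ideal.mem_span_singleton_self _
  obtain ⟨S, _, _, Φ, τ, x, h, hx⟩ := exists_isSimpleTower hcomm
    (isUnit_det_extendedMatrix hA hA.inv) h𝔟 span_detRelation_ne_top
  refine ⟨S, _, _, Φ, τ, x, h, ?_⟩
  have hzero := hx _ (Ideal.mem_span_singleton_self _)
  rw [← RingHom.coe_coe, map_detRelation, sub_eq_zero] at hzero
  simp only [RingHom.coe_coe, aeval_X] at hzero
  exact hzero

variable {K S ι : Type*} [Field K] [CommRing S] [Algebra K S] [Fintype ι] [DecidableEq ι]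
  {φ σ : K →+* K} {A : Matrix ι ι K} {c : K} {Φ τ : S →+* S} {x : ℕ × (ι × ι ⊕ Unit) → S}

namespace IsTower

variable (h : IsTower φ σ (extendedMatrix A c) Φ τ x)
include h

theorem map_phi_solutionMatrix :
    (solutionMatrix x 0).map Φ = A.map (algebraMap K S) * solutionMatrix x 0 := by
  ext1 p q
  rw [map_apply, solutionMatrix, of_apply, h.phi_gen]
  exact sum_extendedMatrix_inl (algebraMap K S) A c (fun w => x (0, w)) p q

theorem map_sigma_pow_solutionMatrix (i : ℕ) :
    (solutionMatrix x 0).map (τ ^ i) = solutionMatrix x i :=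
  Matrix.ext fun _ _ => h.sigma_pow_gen i _

theorem det_solutionMatrix_mul (hdet : (solutionMatrix x 0).det * x (0, Sum.inr ()) = 1) (i : ℕ) :
    (solutionMatrix x i).det * x (i, Sum.inr ()) = 1 := by
  rw [← h.map_sigma_pow_solutionMatrix, ← RingHom.mapMatrix_apply, ← RingHom.map_det,
    ← h.sigma_pow_gen, ← map_mul, hdet, map_one]

theorem map_phi_extendedMatrix :
    (extendedMatrix (solutionMatrix x 0) (x (0, Sum.inr ()))).map Φ =
      (extendedMatrix A c).map (algebraMap K S) *
        extendedMatrix (solutionMatrix x 0) (x (0, Sum.inr ())) := by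
  have hz : Φ (x (0, Sum.inr ())) = algebraMap K S c * x (0, Sum.inr ()) :=
    (h.phi_gen _).trans (sum_extendedMatrix_inr (algebraMap K S) A c fun w => x (0, w))
  rw [extendedMatrix_map, extendedMatrix_map, extendedMatrix_mul, h.map_phi_solutionMatrix, hz]

end IsTower

theorem IsSimpleTower.exists_isCyclicDomainIdempotent_of_det [IsAlgClosed (fixedField φ)]
    (h : IsSimpleTower φ σ (extendedMatrix A c) Φ τ x) (hA : IsUnit A.det) (hc : IsUnit c)
    (honto : ∀ a : K, φ a = a → ∃ b, φ b = b ∧ σ b = a)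
    (hdet : (solutionMatrix x 0).det * x (0, Sum.inr ()) = 1) :
    ∃ e t, IsCyclicDomainIdempotent Φ e t :=
  h.exists_isCyclicDomainIdempotent (isUnit_det_extendedMatrix hA hc) honto
    (isUnit_det_extendedMatrix (.of_mul_eq_one _ hdet) (.of_mul_eq_one_right _ hdet))
    h.map_phi_extendedMatrix

section UnitFractions

variable {L : Type*} [CommRing L]

/-- The elements `a * u⁻¹` with `a, u ∈ T` and `u` a unit of the ambient ring. -/
def unitFractions (T : Subring L) : Subring L where
  carrier := {y | ∃ u ∈ T, IsUnit u ∧ y * u ∈ T}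
  zero_mem' := ⟨1, T.one_mem, isUnit_one, by rw [zero_mul]; exact T.zero_mem⟩
  one_mem' := ⟨1, T.one_mem, isUnit_one, by rw [one_mul]; exact T.one_mem⟩
  neg_mem' := fun ⟨u, hu, huu, hy⟩ => ⟨u, hu, huu, by rw [neg_mul]; exact T.neg_mem hy⟩
  mul_mem' := fun {y z} ⟨u, hu, huu, hy⟩ ⟨v, hv, hvu, hz⟩ =>
    ⟨u * v, T.mul_mem hu hv, huu.mul hvu, by
      rw [mul_mul_mul_comm]; exact T.mul_mem hy hz⟩
  add_mem' := fun {y z} ⟨u, hu, huu, hy⟩ ⟨v, hv, hvu, hz⟩ =>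
    ⟨u * v, T.mul_mem hu hv, huu.mul hvu, by
      rw [show (y + z) * (u * v) = y * u * v + z * v * u by ring]
      exact T.add_mem (T.mul_mem hy hv) (T.mul_mem hz hu)⟩

theorem le_unitFractions (T : Subring L) : T ≤ unitFractions T := fun y hy =>
  ⟨1, T.one_mem, isUnit_one, by rwa [mul_one]⟩

theorem mem_unitFractions_of_mul_mem {T : Subring L} {y u : L} (hu : u ∈ unitFractions T)
    (huu : IsUnit u) (h : y * u ∈ unitFractions T) : y ∈ unitFractions T := by
  obtain ⟨v, hv, hvu, huv⟩ := hu
  obtain ⟨w, hw, hwu, hyw⟩ := h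
  refine ⟨u * v * w, T.mul_mem huv hw, (huu.mul hvu).mul hwu, ?_⟩
  rw [show y * (u * v * w) = y * u * w * v by ring]
  exact T.mul_mem hyw hv

theorem det_mem_of_forall_mem {T : Subring L} {M : Matrix ι ι L} (hM : ∀ p q, M p q ∈ T) :
    M.det ∈ T := by
  rw [det_apply]
  exact sum_mem fun τ _ => T.zsmul_mem (T.prod_mem fun i _ => hM _ _) _

/-- Inverting units recovers the inverse determinants, so the solution matrices alone generate. -/
theorem IsTower.map_mem_unitFractions (h : IsTower φ σ (extendedMatrix A c) Φ τ x)
    (hdet : (solutionMatrix x 0).det * x (0, Sum.inr ()) = 1) (j : S →+* L) {T : Subring L}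
    (hK : ∀ a, j (algebraMap K S a) ∈ T) (hx : ∀ i p q, j (solutionMatrix x i p q) ∈ T) (s : S) :
    j s ∈ unitFractions T := by
  refine h.mem_of_gen_mem (T := (unitFractions T).comap j) (fun a => le_unitFractions T (hK a)) ?_ s
  rintro ⟨i, ⟨p, q⟩ | _⟩
  · exact le_unitFractions T (hx i p q)
  · have hone : j (x (i, Sum.inr ())) * j (solutionMatrix x i).det = 1 := by
      rw [← map_mul, mul_comm, h.det_solutionMatrix_mul hdet, map_one]
    refine mem_unitFractions_of_mul_mem (le_unitFractions T ?_) (.of_mul_eq_one_right _ hone)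
      (hone ▸ one_mem _)
    rw [RingHom.map_det]
    exact det_mem_of_forall_mem (hx i)

theorem IsTower.mem_unitFractions [Algebra S L] [IsFractionRing S L]
    (h : IsTower φ σ (extendedMatrix A c) Φ τ x)
    (hdet : (solutionMatrix x 0).det * x (0, Sum.inr ()) = 1) {T : Subring L}
    (hK : ∀ a, algebraMap S L (algebraMap K S a) ∈ T)
    (hx : ∀ i p q, algebraMap S L (solutionMatrix x i p q) ∈ T) (y : L) :
    y ∈ unitFractions T := by
  have hS := h.map_mem_unitFractions hdet (algebraMap S L) hK hx
  obtain ⟨⟨a, s⟩, hs⟩ := IsLocalization.surj (nonZeroDivisors S) y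
  exact mem_unitFractions_of_mul_mem (hS s) (IsLocalization.map_units L s) (hs ▸ hS a)

end UnitFractions

end FundamentalMatrix

section FractionRing

variable {K S L : Type*} [Field K] [CommRing S] [Algebra K S] [CommRing L] [Algebra S L]
  {φ σ : K →+* K} {Φ τ : S →+* S} {Φ' τ' : L →+* L}

namespace IsTower

variable {ι : Type*} [Fintype ι] [DecidableEq ι] {A : Matrix ι ι K} {c : K}
  {x : ℕ × (ι × ι ⊕ Unit) → S} (h : IsTower φ σ (extendedMatrix A c) Φ τ x)
include h

theorem map_iterate_solutionMatrix (hτ : ∀ a, τ' (algebraMap S L a) = algebraMap S L (τ a))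
    (i : ℕ) : ((solutionMatrix x 0).map (algebraMap S L)).map τ'^[i] =
      (solutionMatrix x i).map (algebraMap S L) := by
  rw [← h.map_sigma_pow_solutionMatrix i, ← RingHom.coe_pow]
  exact Matrix.ext fun _ _ => pow_apply_of_semiconj hτ i _

theorem map_map_solutionMatrix (hΦ : ∀ a, Φ' (algebraMap S L a) = algebraMap S L (Φ a)) :
    ((solutionMatrix x 0).map (algebraMap S L)).map Φ' =
      A.map ((algebraMap S L).comp (algebraMap K S)) *
        (solutionMatrix x 0).map (algebraMap S L) := by
  have hswap : ((solutionMatrix x 0).map (algebraMap S L)).map Φ' =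
      ((solutionMatrix x 0).map Φ).map (algebraMap S L) := Matrix.ext fun _ _ => hΦ _
  rw [hswap, h.map_phi_solutionMatrix, Matrix.map_mul, Matrix.map_map]
  rfl

variable [IsFractionRing S L]

theorem mem_unitFractions_closure (hdet : (solutionMatrix x 0).det * x (0, Sum.inr ()) = 1)
    (hτ : ∀ a, τ' (algebraMap S L a) = algebraMap S L (τ a)) (y : L) :
    y ∈ unitFractions (Subring.closure (Set.range ((algebraMap S L).comp (algebraMap K S)) ∪
      {z | ∃ i p q, ((solutionMatrix x 0).map (algebraMap S L)).map τ'^[i] p q = z})) :=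
  h.mem_unitFractions hdet (fun a => Subring.subset_closure (.inl ⟨a, rfl⟩))
    (fun i p q => Subring.subset_closure
      (.inr ⟨i, p, q, by rw [h.map_iterate_solutionMatrix hτ, Matrix.map_apply]⟩)) y

end IsTower

variable [IsFractionRing S L]

theorem comp_comm_of_isFractionRing (hcomm : ∀ a, Φ (τ a) = τ (Φ a))
    (hΦ : ∀ a, Φ' (algebraMap S L a) = algebraMap S L (Φ a))
    (hτ : ∀ a, τ' (algebraMap S L a) = algebraMap S L (τ a)) : Φ'.comp τ' = τ'.comp Φ' :=
  IsLocalization.ringHom_ext (nonZeroDivisors S) <| RingHom.ext fun a => by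
    simp only [RingHom.comp_apply, hΦ, hτ, hcomm]

theorem IsSimpleTower.fixed_iff {V : Type*} [Fintype V] {B : Matrix V V K} {x : ℕ × V → S}
    [IsAlgClosed (fixedField φ)] (h : IsSimpleTower φ σ B Φ τ x)
    (hΦ : ∀ a, Φ' (algebraMap S L a) = algebraMap S L (Φ a)) (c : L) :
    Φ' c = c ↔ ∃ a, φ a = a ∧ algebraMap S L (algebraMap K S a) = c := by
  constructor
  · intro hc
    obtain ⟨s, hs, rfl⟩ := h.diffSimple.exists_fixed_of_isFractionRing hΦ hc
    obtain ⟨a, ha, rfl⟩ := h.exists_eq_algebraMap hs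
    exact ⟨a, ha, rfl⟩
  · rintro ⟨a, ha, rfl⟩
    rw [hΦ, h.phi_algebraMap, ha]

end FractionRing

/-- Existence of `σ`-Picard–Vessiot extensions: if `K` is a `φσ`-field whose field of
`φ`-constants `K^φ` is algebraically closed and mapped onto itself by `σ`, then for every
`A ∈ GLₙ(K)` there exists a `σ`-PV extension for `φ(y) = Ay`. -/
theorem exists_sigma_pv_extension
    {K : Type u} [Field K] {n : ℕ}
    (φ σ : K →+* K) (hcomm : φ.comp σ = σ.comp φ)
    (honto : ∀ a : K, φ a = a → ∃ b : K, φ b = b ∧ σ b = a)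
    -- `K^φ` is algebraically closed
    (halgcl : ∀ p : Polynomial K, (∀ m : ℕ, φ (p.coeff m) = p.coeff m) → 0 < p.degree →
      ∃ a : K, φ a = a ∧ Polynomial.eval a p = 0)
    (A : Matrix (Fin n) (Fin n) K) (hA : IsUnit A.det) :
    ∃ (L : Type u) (_ : CommRing L) (Φ σ' : L →+* L) (ι : K →+* L),
      Function.Injective ι ∧
      Φ.comp ι = ι.comp φ ∧
      σ'.comp ι = ι.comp σ ∧
      Φ.comp σ' = σ'.comp Φ ∧
      -- `(L, Φ)` is a `φ`-pseudo field
      PseudoField L Φ ∧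
      -- the `Φ`-constants of `L` are exactly `ι(K^φ)`
      (∀ x : L, Φ x = x ↔ ∃ a : K, φ a = a ∧ ι a = x) ∧
      -- a fundamental solution matrix `Y` that `σ`-generates `L` over `K`
      ∃ Y : Matrix (Fin n) (Fin n) L, IsUnit Y.det ∧ Y.map ⇑Φ = A.map ⇑ι * Y ∧
        ∀ x : L, ∃ a b : L,
          a ∈ Subring.closure
            (Set.range ι ∪ {z : L | ∃ (i : ℕ) (p q : Fin n), (Y.map ((⇑σ')^[i])) p q = z}) ∧
          b ∈ Subring.closure
            (Set.range ι ∪ {z : L | ∃ (i : ℕ) (p q : Fin n), (Y.map ((⇑σ')^[i])) p q = z}) ∧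
          IsUnit b ∧ x * b = a := by
  have := isAlgClosed_fixedField halgcl
  obtain ⟨S, _, _, Φ, τ, x, h, hdet⟩ := exists_isSimpleTower_extendedMatrix hcomm hA
  obtain ⟨e, t, he⟩ := h.exists_isCyclicDomainIdempotent_of_det hA hA.inv honto hdet
  obtain ⟨Φ', hΦ⟩ := he.exists_extension (L := FractionRing S) h.diffSimple fun _ => rfl
  obtain ⟨τ', hτ⟩ := he.exists_extension (L := FractionRing S) h.diffSimple h.comm
  have hpf := he.pseudoField h.diffSimple hΦ
  have := hpf.1.nontrivial
  let j := algebraMap S (FractionRing S)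
  refine ⟨FractionRing S, inferInstance, Φ', τ', j.comp (algebraMap K S), RingHom.injective _,
    RingHom.ext fun a => (hΦ _).trans (congrArg j (h.phi_algebraMap a)),
    RingHom.ext fun a => (hτ _).trans (congrArg j (h.sigma_algebraMap a)),
    comp_comm_of_isFractionRing h.comm hΦ hτ, hpf, h.fixed_iff hΦ, (solutionMatrix x 0).map j,
    ?_, h.map_map_solutionMatrix hΦ, fun y => ?_⟩
  · rw [← RingHom.mapMatrix_apply, ← RingHom.map_det]
    exact (IsUnit.of_mul_eq_one _ hdet).map j
  · obtain ⟨u, hu, huu, hy⟩ := h.mem_unitFractions_closure hdet hτ y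
    exact ⟨_, u, hy, hu, huu, rfl⟩
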